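/- arXiv:1807.00233 — 4 statements merged into one kernel-verified Lean document; each statement's English description precedes it below -/
import Mathlib

section
/- For every ω ∈ ℝ, every λ ∈ ℝ and every integer n ≥ 1, there exist real numbers α_0, α_2, …, α_{2n} such that P_n(λ') = ∑_{k=0}^{n} α_{2k} (λ')^{2k} for all λ' ∈ ℝ, and moreover α_4 = 4·∑_{m=1}^{⌊n/2⌋} |∑_{l=1}^{m} exp(2πi·ω·(l²−l))|² + 4·∑_{m=1}^{⌊(n−1)/2⌋} |∑_{l=1}^{m} exp(2πi·ω·(l²−l))|². -/
open MeasureTheory Real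
open scoped Matrix

/-- The skew-shift potential `v_j(x,y) = 2 cos(2π(j(j-1)/2·ω + j·y + x))`. -/
noncomputable def v (ω : ℝ) (j : ℕ) (x y : ℝ) : ℝ :=
  2 * Real.cos (2 * Real.pi * ((j : ℝ) * ((j : ℝ) - 1) / 2 * ω + (j : ℝ) * y + x))

/-- The zero-energy transfer matrix `A_j(x,y)`. -/
noncomputable def A (ω lam : ℝ) (j : ℕ) (x y : ℝ) : Matrix (Fin 2) (Fin 2) ℝ :=
  !![-(lam * v ω j x y), -1; 1, 0]

/-- The transfer matrix products `M_n(x,y) = A_n(x,y) ⋯ A_1(x,y)`. -/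
noncomputable def M (ω lam : ℝ) : ℕ → ℝ → ℝ → Matrix (Fin 2) (Fin 2) ℝ
  | 0, _, _ => 1
  | n + 1, x, y => A ω lam (n + 1) x y * M ω lam n x y

/-- `P_n(λ) = ∫₀¹∫₀¹ Tr(M_n(x,y)ᵀ M_n(x,y)) dx dy`. -/
noncomputable def P (ω : ℝ) (n : ℕ) (lam : ℝ) : ℝ :=
  ∫ x in (0:ℝ)..1, ∫ y in (0:ℝ)..1,
    Matrix.trace ((M ω lam n x y)ᵀ * M ω lam n x y)

open Polynomial in
/-- continuants -/
noncomputable def KK {R : Type*} [CommRing R] (u : ℕ → R) : ℕ → Polynomial R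
  | 0 => 0
  | 1 => 1
  | n + 2 => -(Polynomial.C (u (n + 1)) * Polynomial.X * KK u (n + 1)) - KK u n

noncomputable def skT (i : ℕ) : ℝ := (i : ℝ) * ((i : ℝ) - 1) / 2

noncomputable def skc (ω t : ℝ) : ℝ := 2 * Real.cos (2 * Real.pi * (t * ω))

noncomputable def skG (ω : ℝ) (i j k l : ℕ) : ℝ :=
  (if i + j = k + l then skc ω (skT i + skT j - skT k - skT l) else 0)
  + (if i + k = j + l then skc ω (skT i + skT k - skT j - skT l) else 0)
  + (if i + l = j + k then skc ω (skT i + skT l - skT j - skT k) else 0)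

lemma skT_succ (i : ℕ) : skT (i + 1) = skT i + i := by
  unfold skT; push_cast; ring

lemma skG_shift (ω : ℝ) (i j k l : ℕ) :
    skG ω (i + 1) (j + 1) (k + 1) (l + 1) = skG ω i j k l := by
  unfold skG
  congr 1
  · congr 1
    · by_cases h : i + j = k + l
      · have h' : (i : ℝ) + j = k + l := by exact_mod_cast h
        rw [if_pos h, if_pos (by omega)]
        simp only [skT_succ]; congr 1; linarith
      · rw [if_neg h, if_neg (by omega)]
    · by_cases h : i + k = j + l
      · have h' : (i : ℝ) + k = j + l := by exact_mod_cast h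
        rw [if_pos h, if_pos (by omega)]
        simp only [skT_succ]; congr 1; linarith
      · rw [if_neg h, if_neg (by omega)]
  · by_cases h : i + l = j + k
    · have h' : (i : ℝ) + l = j + k := by exact_mod_cast h
      rw [if_pos h, if_pos (by omega)]
      simp only [skT_succ]; congr 1; linarith
    · rw [if_neg h, if_neg (by omega)]

section alg
variable {R : Type*} [CommRing R] (u : ℕ → R)

lemma KK_succ (n : ℕ) : KK u (n + 2) =
    -(Polynomial.C (u (n + 1)) * Polynomial.X * KK u (n + 1)) - KK u n := rfl

lemma KK_coeff_succ (n d : ℕ) : (KK u (n + 2)).coeff (d + 1) =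
    -(u (n + 1) * (KK u (n + 1)).coeff d) - (KK u n).coeff (d + 1) := by
  rw [KK_succ, Polynomial.coeff_sub, Polynomial.coeff_neg, mul_assoc, Polynomial.coeff_C_mul,
    Polynomial.coeff_X_mul]

lemma KK_coeff_zero (n : ℕ) : (KK u (n + 2)).coeff 0 = - (KK u n).coeff 0 := by
  rw [KK_succ, Polynomial.coeff_sub, Polynomial.coeff_neg, mul_assoc, Polynomial.coeff_C_mul,
    Polynomial.coeff_X_mul_zero]
  ring

lemma KK_parity : ∀ n d : ℕ, (n + d) % 2 = 0 → (KK u n).coeff d = 0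
  | 0, d, _ => by simp [KK]
  | 1, d, h => by
      have : d ≠ 0 := by omega
      simp [KK, Polynomial.coeff_one, this]
  | n + 2, 0, h => by
      rw [KK_coeff_zero, KK_parity n 0 (by omega), neg_zero]
  | n + 2, d + 1, h => by
      rw [KK_coeff_succ, KK_parity (n + 1) d (by omega), KK_parity n (d + 1) (by omega)]
      simp

lemma KK_deg : ∀ n d : ℕ, n ≤ d → (KK u n).coeff d = 0
  | 0, d, _ => by simp [KK]
  | 1, d, h => by
      have : d ≠ 0 := by omega
      simp [KK, Polynomial.coeff_one, this]
  | n + 2, 0, h => by omega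
  | n + 2, d + 1, h => by
      rw [KK_coeff_succ, KK_deg (n + 1) d (by omega), KK_deg n (d + 1) (by omega)]
      simp

lemma KK_sq_odd (n d : ℕ) (h : d % 2 = 1) : ((KK u n) ^ 2).coeff d = 0 := by
  rw [sq, Polynomial.coeff_mul]
  apply Finset.sum_eq_zero
  intro p hp
  rw [Finset.HasAntidiagonal.mem_antidiagonal] at hp
  by_cases h1 : (n + p.1) % 2 = 0
  · rw [KK_parity u n _ h1, zero_mul]
  · rw [KK_parity u n p.2 (by omega), mul_zero]

lemma KK_sq_deg (n d : ℕ) (h : 2 * n ≤ d + 1) : ((KK u n) ^ 2).coeff d = 0 := by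
  rw [sq, Polynomial.coeff_mul]
  apply Finset.sum_eq_zero
  intro p hp
  rw [Finset.HasAntidiagonal.mem_antidiagonal] at hp
  by_cases h1 : n ≤ p.1
  · rw [KK_deg u n _ h1, zero_mul]
  · rw [KK_deg u n p.2 (by omega), mul_zero]

def kO1 (n : ℕ) : R := ∑ i ∈ Finset.range n, u (2 * i + 1)
def kB2 (n : ℕ) : R := ∑ k ∈ Finset.range n, u (2 * k + 2) * kO1 u (k + 1)
def kO3 (n : ℕ) : R := ∑ k ∈ Finset.range n, u (2 * k + 1) * kB2 u k
def kB4 (n : ℕ) : R := ∑ k ∈ Finset.range n, u (2 * k + 2) * kO3 u (k + 1)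

lemma KK_coeffs (N : ℕ) :
    (KK u (2 * N)).coeff 1 = (-1) ^ N * kO1 u N ∧
    (KK u (2 * N)).coeff 3 = (-1) ^ (N + 1) * kO3 u N ∧
    (KK u (2 * N + 1)).coeff 0 = (-1) ^ N ∧
    (KK u (2 * N + 1)).coeff 2 = (-1) ^ (N + 1) * kB2 u N ∧
    (KK u (2 * N + 1)).coeff 4 = (-1) ^ N * kB4 u N := by
  induction N with
  | zero => simp [KK, kO1, kO3, kB2, kB4, Polynomial.coeff_one]
  | succ N ih =>
    obtain ⟨h1, h3, h0, h2, h4⟩ := ih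
    have e1 : (KK u (2 * (N + 1))).coeff 1 = (-1) ^ (N + 1) * kO1 u (N + 1) := by
      rw [show 2 * (N + 1) = 2 * N + 2 by ring, KK_coeff_succ, h0, h1]
      simp only [kO1, Finset.sum_range_succ]; ring
    have e3 : (KK u (2 * (N + 1))).coeff 3 = (-1) ^ (N + 1 + 1) * kO3 u (N + 1) := by
      rw [show 2 * (N + 1) = 2 * N + 2 by ring, KK_coeff_succ, h2, h3]
      simp only [kO3, Finset.sum_range_succ]; ring
    refine ⟨e1, e3, ?_, ?_, ?_⟩
    · rw [show 2 * (N + 1) + 1 = (2 * N + 1) + 2 by ring, KK_coeff_zero, h0]; ring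
    · rw [show 2 * (N + 1) + 1 = (2 * N + 1) + 2 by ring, KK_coeff_succ,
        show 2 * N + 1 + 1 = 2 * (N + 1) by ring, e1, h2]
      simp only [kB2, Finset.sum_range_succ]; ring
    · rw [show 2 * (N + 1) + 1 = (2 * N + 1) + 2 by ring, KK_coeff_succ,
        show 2 * N + 1 + 1 = 2 * (N + 1) by ring, e3, h4]
      simp only [kB4, Finset.sum_range_succ]; ring

lemma coeff_sq_four (p : Polynomial R) : (p ^ 2).coeff 4 =
    2 * (p.coeff 0 * p.coeff 4) + 2 * (p.coeff 1 * p.coeff 3) + p.coeff 2 ^ 2 := by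
  rw [sq, Polynomial.coeff_mul, Finset.Nat.sum_antidiagonal_eq_sum_range_succ_mk]
  simp [Finset.sum_range_succ]; ring

lemma KK_even4 (N : ℕ) : ((KK u (2 * N)) ^ 2).coeff 4 = -2 * (kO1 u N * kO3 u N) := by
  obtain ⟨h1, h3, -, -, -⟩ := KK_coeffs u N
  rw [coeff_sq_four, h1, h3, KK_parity u (2 * N) 0 (by omega), KK_parity u (2 * N) 2 (by omega)]
  have : ((-1 : R) ^ N) * (-1) ^ N = 1 := by rw [← mul_pow]; simp
  rw [pow_succ]
  linear_combination (-2 * (kO1 u N * kO3 u N)) * this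

lemma KK_odd4 (N : ℕ) : ((KK u (2 * N + 1)) ^ 2).coeff 4 = kB2 u N ^ 2 + 2 * kB4 u N := by
  obtain ⟨-, -, h0, h2, h4⟩ := KK_coeffs u N
  rw [coeff_sq_four, h0, h2, h4, KK_parity u (2 * N + 1) 1 (by omega)]
  have : ((-1 : R) ^ N) * (-1) ^ N = 1 := by rw [← mul_pow]; simp
  rw [pow_succ]
  linear_combination (kB2 u N ^ 2 + 2 * kB4 u N) * this
end alg

section expct
variable {R : Type*} [CommRing R] [Algebra ℝ R] (u : ℕ → R) (E : R →ₗ[ℝ] ℝ) (ω : ℝ)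

/-- the terms -/
noncomputable def skg (ω : ℝ) (r d : ℕ) : ℝ := skc ω ((2 * (r : ℝ) + 1) * (2 * (d : ℝ)))

lemma E_O1O3 (hE : ∀ i j k l, E (u i * u j * u k * u l) = skG ω i j k l)
    (N : ℕ) : E (kO1 u N * kO3 u N) = 0 := by
  simp only [kO1, kO3, kB2, Finset.mul_sum, Finset.sum_mul, map_sum]
  refine Finset.sum_eq_zero fun i _ => Finset.sum_eq_zero fun k _ => Finset.sum_eq_zero fun k' _ =>
    Finset.sum_eq_zero fun i' _ => ?_
  rw [show ∀ a b c d : R, a * (b * (c * d)) = a * b * c * d by intros; ring]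
  rw [hE, skG,
    if_neg (by omega), if_neg (by omega), if_neg (by omega)]
  simp

lemma four_assoc2 {R : Type*} [CommRing R] (a b c d : R) : a * (b * (c * d)) = a * b * c * d := by ring

lemma E_VVOO (hE : ∀ i j k l, E (u i * u j * u k * u l) = skG ω i j k l) (N : ℕ) :
    E (u (2 * N + 2) * u (2 * N + 2) * kO1 u (N + 1) * kO1 u (N + 1)) = 4 * ((N : ℝ) + 1) := by
  simp only [kO1, Finset.mul_sum, Finset.sum_mul, map_sum, hE]
  have : ∀ i ∈ Finset.range (N + 1), ∀ j ∈ Finset.range (N + 1),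
      skG ω (2 * N + 2) (2 * N + 2) (2 * j + 1) (2 * i + 1) = if i = j then 4 else 0 := by
    intro i hi j hj
    rw [Finset.mem_range] at hi hj
    rw [skG, if_neg (by omega)]
    by_cases h : i = j
    · subst h
      rw [if_pos rfl, if_pos rfl]
      have : ∀ a b : ℝ, a + b - a - b = 0 := by intros; ring
      rw [this, skc]; simp; norm_num
    · rw [if_neg (by omega), if_neg (by omega), if_neg h]; simp
  rw [Finset.sum_congr rfl fun i hi => Finset.sum_congr rfl fun j hj => this i hi j hj]
  have h4 : ∀ i ∈ Finset.range (N + 1), (∑ j ∈ Finset.range (N + 1), if i = j then (4:ℝ) else 0) = 4 := by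
    intro i hi
    rw [Finset.sum_ite_eq, if_pos hi]
  rw [Finset.sum_congr rfl h4]
  simp
  ring

noncomputable def skS (ω : ℝ) (N : ℕ) : ℝ :=
  ∑ k ∈ Finset.range N, ∑ j ∈ Finset.range (k + 1), skg ω (k - j) (N - k)

lemma E_VBO (hE : ∀ i j k l, E (u i * u j * u k * u l) = skG ω i j k l) (N : ℕ) :
    E (u (2 * N + 2) * kB2 u N * kO1 u (N + 1)) = skS ω N +
      ∑ k ∈ Finset.range N, ∑ j ∈ Finset.range (k + 1),
        if N + j ≤ 2 * k then skg ω (k - j) (N - k) else 0 := by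
  have e : u (2 * N + 2) * kB2 u N * kO1 u (N + 1) = ∑ k ∈ Finset.range N,
      ∑ j ∈ Finset.range (k + 1), ∑ j' ∈ Finset.range (N + 1),
        u (2 * N + 2) * u (2 * k + 2) * u (2 * j + 1) * u (2 * j' + 1) := by
    simp only [kO1, kB2, Finset.mul_sum, Finset.sum_mul]
    rw [Finset.sum_comm]
    refine Finset.sum_congr rfl fun k _ => ?_
    rw [Finset.sum_comm]
    refine Finset.sum_congr rfl fun j _ => Finset.sum_congr rfl fun j' _ => ?_
    ring
  rw [e]
  simp only [map_sum, hE]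
  rw [skS, ← Finset.sum_add_distrib]
  refine Finset.sum_congr rfl fun k hk => ?_
  rw [Finset.mem_range] at hk
  have : ∀ j ∈ Finset.range (k + 1), ∀ j' ∈ Finset.range (N + 1),
      skG ω (2 * N + 2) (2 * k + 2) (2 * j + 1) (2 * j' + 1) =
        (if N + j - k = j' then skg ω (k - j) (N - k) else 0) +
        (if N + j' = k + j then skg ω (k - j') (N - k) else 0) := by
    intro j hj j' hj'
    rw [Finset.mem_range] at hj hj'
    rw [skG, if_neg (by omega), zero_add]
    congr 1
    · by_cases h : N + j - k = j'
      · have h' : N + j = k + j' := by omega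
        have h2 : (N : ℝ) + j = k + j' := by exact_mod_cast h'
        rw [if_pos (by omega), if_pos h, skg, Nat.cast_sub (by omega), Nat.cast_sub (by omega)]
        have : (j' : ℝ) = N + j - k := by linarith
        congr 1
        simp only [skT]; push_cast; rw [this]; ring
      · rw [if_neg (by omega), if_neg h]
    · by_cases h : N + j' = k + j
      · have h2 : (N : ℝ) + j' = k + j := by exact_mod_cast h
        rw [if_pos (by omega), if_pos h, skg, Nat.cast_sub (by omega), Nat.cast_sub (by omega)]
        have : (j : ℝ) = N + j' - k := by linarith
        congr 1
        simp only [skT]; push_cast; rw [this]; ring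
      · rw [if_neg (by omega), if_neg h]
  rw [Finset.sum_congr rfl fun j hj => Finset.sum_congr rfl fun j' hj' => this j hj j' hj']
  simp only [Finset.sum_add_distrib]
  congr 1
  · refine Finset.sum_congr rfl fun j hj => ?_
    rw [Finset.mem_range] at hj
    rw [Finset.sum_ite_eq, if_pos (by rw [Finset.mem_range]; omega)]
  · rw [Finset.sum_comm]
    symm
    rw [← Finset.sum_subset (Finset.range_subset_range.2 (show k + 1 ≤ N + 1 by omega))]
    · refine Finset.sum_congr rfl fun j' hj' => ?_
      rw [Finset.mem_range] at hj'
      have : ∀ j, (N + j' = k + j) ↔ (N + j' - k = j) := by omega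
      simp only [this]
      rw [Finset.sum_ite_eq]
      simp only [Finset.mem_range]
      congr 1
      apply propext; omega
    · intro j' _ h
      rw [Finset.mem_range] at h
      refine Finset.sum_eq_zero fun j hj => ?_
      rw [Finset.mem_range] at hj
      rw [if_neg (by omega)]

lemma E_VO3 (hE : ∀ i j k l, E (u i * u j * u k * u l) = skG ω i j k l) (N : ℕ) :
    E (u (2 * N + 2) * kO3 u (N + 1)) =
      ∑ k ∈ Finset.range N, ∑ j ∈ Finset.range (k + 1),
        if N + j ≤ 2 * k then 0 else skg ω (k - j) (N - k) := by
  simp only [kO3, kO1, kB2, Finset.mul_sum, four_assoc2, map_sum, hE]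
  rw [Finset.sum_comm' (s' := fun k => Finset.Ico (k + 1) (N + 1)) (t' := Finset.range N)
    (by intro x y; simp only [Finset.mem_range, Finset.mem_Ico]; omega)]
  refine Finset.sum_congr rfl fun k hk => ?_
  rw [Finset.mem_range] at hk
  rw [Finset.sum_comm]
  refine Finset.sum_congr rfl fun j hj => ?_
  rw [Finset.mem_range] at hj
  have : ∀ j' ∈ Finset.Ico (k + 1) (N + 1),
      skG ω (2 * N + 2) (2 * j' + 1) (2 * k + 2) (2 * j + 1) =
        (if N + j - k = j' then skg ω (k - j) (N - k) else 0) := by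
    intro j' hj'
    rw [Finset.mem_Ico] at hj'
    rw [skG, if_neg (by omega), if_neg (by omega), zero_add, zero_add]
    by_cases h : N + j - k = j'
    · have h' : N + j = k + j' := by omega
      have h2 : (N : ℝ) + j = k + j' := by exact_mod_cast h'
      rw [if_pos (by omega), if_pos h, skg, Nat.cast_sub (by omega), Nat.cast_sub (by omega)]
      have : (j' : ℝ) = N + j - k := by linarith
      congr 1
      simp only [skT]; push_cast; rw [this]; ring
    · rw [if_neg (by omega), if_neg h]
  rw [Finset.sum_congr rfl this, Finset.sum_ite_eq]
  simp only [Finset.mem_Ico]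
  by_cases h : N + j ≤ 2 * k
  · rw [if_pos h, if_neg (by omega)]
  · rw [if_neg h, if_pos (by omega)]

lemma E_step (hE : ∀ i j k l, E (u i * u j * u k * u l) = skG ω i j k l) (N : ℕ) :
    E (kB2 u (N + 1) ^ 2 + 2 * kB4 u (N + 1)) = E (kB2 u N ^ 2 + 2 * kB4 u N)
      + 4 * ((N : ℝ) + 1 + skS ω N) := by
  have e : kB2 u (N + 1) ^ 2 + 2 * kB4 u (N + 1) = (kB2 u N ^ 2 + 2 * kB4 u N)
      + (2 : ℝ) • (u (2 * N + 2) * kB2 u N * kO1 u (N + 1))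
      + (2 : ℝ) • (u (2 * N + 2) * kO3 u (N + 1))
      + u (2 * N + 2) * u (2 * N + 2) * kO1 u (N + 1) * kO1 u (N + 1) := by
    have h2 : kB2 u (N + 1) = kB2 u N + u (2 * N + 2) * kO1 u (N + 1) := by
      simp only [kB2, Finset.sum_range_succ]
    have h4 : kB4 u (N + 1) = kB4 u N + u (2 * N + 2) * kO3 u (N + 1) := by
      simp only [kB4, Finset.sum_range_succ]
    rw [h2, h4, two_smul, two_smul]; ring
  rw [e]
  simp only [map_add, map_smul, smul_eq_mul]
  rw [E_VVOO u E ω hE, E_VBO u E ω hE, E_VO3 u E ω hE]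
  have : skS ω N = (∑ k ∈ Finset.range N, ∑ j ∈ Finset.range (k + 1),
        if N + j ≤ 2 * k then skg ω (k - j) (N - k) else 0) +
        ∑ k ∈ Finset.range N, ∑ j ∈ Finset.range (k + 1),
        if N + j ≤ 2 * k then 0 else skg ω (k - j) (N - k) := by
    rw [skS, ← Finset.sum_add_distrib]
    refine Finset.sum_congr rfl fun k _ => ?_
    rw [← Finset.sum_add_distrib]
    refine Finset.sum_congr rfl fun j _ => ?_
    split_ifs <;> simp
  linarith
end expct

lemma half_sum (m : ℕ) (h : ℕ → ℝ) (hs : ∀ x, x ≤ 2 * m + 1 → h x = h (2 * m + 1 - x)) :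
    ∑ i ∈ Finset.range m, h (2 * i + 2) = ∑ i ∈ Finset.range m, h (m + i + 1) := by
  have a1 : ∀ n, ∑ i ∈ Finset.range (2 * n), h (i + 1) =
      ∑ i ∈ Finset.range n, h (2 * i + 1) + ∑ i ∈ Finset.range n, h (2 * i + 2) := by
    intro n
    induction n with
    | zero => simp
    | succ n ih =>
      rw [show 2 * (n + 1) = 2 * n + 1 + 1 by ring, Finset.sum_range_succ, Finset.sum_range_succ, ih,
        Finset.sum_range_succ, Finset.sum_range_succ]
      ring
  have a2 : ∑ i ∈ Finset.range (2 * m), h (i + 1) =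
      ∑ i ∈ Finset.range m, h (i + 1) + ∑ i ∈ Finset.range m, h (m + i + 1) := by
    rw [two_mul, Finset.sum_range_add]
  have a3 : ∑ i ∈ Finset.range m, h (2 * i + 1) = ∑ i ∈ Finset.range m, h (2 * i + 2) := by
    rw [← Finset.sum_range_reflect]
    refine Finset.sum_congr rfl fun i hi => ?_
    rw [Finset.mem_range] at hi
    rw [hs _ (by omega)]; congr 1; omega
  have a4 : ∑ i ∈ Finset.range m, h (i + 1) = ∑ i ∈ Finset.range m, h (m + i + 1) := by
    rw [← Finset.sum_range_reflect]
    refine Finset.sum_congr rfl fun i hi => ?_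
    rw [Finset.mem_range] at hi
    rw [hs _ (by omega)]; congr 1; omega
  have := a1 m
  linarith

lemma skS_eq (ω : ℝ) (N : ℕ) : skS ω N = ∑ i ∈ Finset.range N, ∑ r ∈ Finset.range (N - i),
    skg ω r (i + 1) := by
  rw [skS, ← Finset.sum_range_reflect]
  refine Finset.sum_congr rfl fun i hi => ?_
  rw [Finset.mem_range] at hi
  rw [show N - 1 - i + 1 = N - i by omega, ← Finset.sum_range_reflect]
  refine Finset.sum_congr rfl fun j hj => ?_
  rw [Finset.mem_range] at hj
  congr 1 <;> omega

lemma skS_succ (ω : ℝ) (N : ℕ) : skS ω (N + 1) = skS ω N +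
    ∑ i ∈ Finset.range (N + 1), skg ω (N - i) (i + 1) := by
  rw [skS_eq, skS_eq, Finset.sum_range_succ, Finset.sum_range_succ _ N, ← add_assoc,
    ← Finset.sum_add_distrib]
  congr 1
  · refine Finset.sum_congr rfl fun i hi => ?_
    rw [Finset.mem_range] at hi
    rw [show N + 1 - i = (N - i) + 1 by omega, Finset.sum_range_succ]
  · simp

/-- Weyl sums -/
noncomputable def skW (ω : ℝ) (m : ℕ) : ℂ := ∑ l ∈ Finset.Icc 1 m,
  Complex.exp (2 * (Real.pi : ℂ) * Complex.I * (ω : ℂ) * ((l : ℂ) ^ 2 - (l : ℂ)))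

lemma exp_re_conj (a b : ℝ) :
    2 * (Complex.exp (a * Complex.I) * (starRingEnd ℂ) (Complex.exp (b * Complex.I))).re =
      2 * Real.cos (b - a) := by
  rw [Complex.exp_mul_I, Complex.exp_mul_I, ← Complex.ofReal_cos, ← Complex.ofReal_sin,
    ← Complex.ofReal_cos, ← Complex.ofReal_sin, Real.cos_sub]
  simp only [map_add, map_mul, Complex.conj_ofReal, Complex.conj_I, Complex.mul_re, Complex.add_re,
    Complex.add_im, Complex.ofReal_re, Complex.ofReal_im, Complex.mul_im, Complex.neg_re,
    Complex.neg_im, Complex.I_re, Complex.I_im]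
  ring

lemma skW_succ (ω : ℝ) (m : ℕ) : ‖skW ω (m + 1)‖ ^ 2 = ‖skW ω m‖ ^ 2 + 1 +
    ∑ l ∈ Finset.range m, skc ω ((m - l : ℝ) * (m + l + 1)) := by
  have he : ∀ l : ℕ, Complex.exp (2 * (Real.pi : ℂ) * Complex.I * (ω : ℂ) * ((l : ℂ) ^ 2 - (l : ℂ)))
      = Complex.exp (((2 * Real.pi * ω * ((l : ℝ) ^ 2 - l) : ℝ) : ℂ) * Complex.I) := by
    intro l; congr 1; push_cast; ring
  have h1 : skW ω (m + 1) = skW ω m +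
      Complex.exp (((2 * Real.pi * ω * (((m + 1 : ℕ) : ℝ) ^ 2 - (m + 1 : ℕ)) : ℝ) : ℂ) * Complex.I) := by
    rw [skW, Finset.sum_Icc_succ_top (by omega), ← he]; rfl
  rw [h1, ← Complex.normSq_eq_norm_sq, ← Complex.normSq_eq_norm_sq, Complex.normSq_add,
    Complex.normSq_eq_norm_sq (Complex.exp _), Complex.norm_exp_ofReal_mul_I, one_pow]
  congr 1
  rw [skW, Finset.sum_mul, Complex.re_sum, Finset.mul_sum, ← Finset.Ico_add_one_right_eq_Icc,
    Finset.sum_Ico_eq_sum_range]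
  refine Finset.sum_congr (by simp) fun l _ => ?_
  rw [he, exp_re_conj, skc]
  congr 2
  push_cast; ring

lemma skW_S (ω : ℝ) (N : ℕ) : ‖skW ω (N + 1)‖ ^ 2 = (N : ℝ) + 1 + skS ω N := by
  induction N with
  | zero => simp [skW, skS]
  | succ N ih =>
    rw [skW_succ, ih, skS_succ]
    have := half_sum (N + 1) (fun x => skc ω ((x : ℝ) * (2 * ((N : ℝ) + 1) + 1 - x))) (by
      intro x hx
      rw [Nat.cast_sub hx]; push_cast; congr 1; ring)
    have e1 : ∑ i ∈ Finset.range (N + 1), skg ω (N - i) (i + 1) = ∑ i ∈ Finset.range (N + 1),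
        skc ω (((2 * i + 2 : ℕ) : ℝ) * (2 * ((N : ℝ) + 1) + 1 - ((2 * i + 2 : ℕ) : ℝ))) := by
      refine Finset.sum_congr rfl fun i hi => ?_
      rw [Finset.mem_range] at hi
      rw [skg, Nat.cast_sub (by omega)]; push_cast; congr 1; ring
    have e2 : ∑ l ∈ Finset.range (N + 1), skc ω ((((N + 1 : ℕ) : ℝ) - l) * (((N + 1 : ℕ) : ℝ) + l + 1))
        = ∑ i ∈ Finset.range (N + 1),
        skc ω (((N + 1 + i + 1 : ℕ) : ℝ) * (2 * ((N : ℝ) + 1) + 1 - ((N + 1 + i + 1 : ℕ) : ℝ))) := by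
      refine Finset.sum_congr rfl fun i hi => ?_
      push_cast; congr 1; ring
    rw [e1, this, e2]; push_cast; ring

section expct2
variable {R : Type*} [CommRing R] [Algebra ℝ R] (u : ℕ → R) (E : R →ₗ[ℝ] ℝ) (ω : ℝ)

lemma E_odd (hE : ∀ i j k l, E (u i * u j * u k * u l) = skG ω i j k l) (N : ℕ) :
    E (((KK u (2 * N + 1)) ^ 2).coeff 4) = 4 * ∑ m ∈ Finset.Icc 1 N, ‖skW ω m‖ ^ 2 := by
  rw [KK_odd4]
  induction N with
  | zero => simp [kB2, kB4]
  | succ N ih =>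
    rw [E_step u E ω hE, ih, Finset.sum_Icc_succ_top (by omega), skW_S]; ring

lemma E_even (hE : ∀ i j k l, E (u i * u j * u k * u l) = skG ω i j k l) (N : ℕ) :
    E (((KK u (2 * N)) ^ 2).coeff 4) = 0 := by
  rw [KK_even4, show -2 * (kO1 u N * kO3 u N) = (-2 : ℝ) • (kO1 u N * kO3 u N) by
    rw [neg_smul, two_smul]; ring, map_smul, E_O1O3 u E ω hE, smul_zero]

end expct2

lemma int_cos (a : ℤ) (t : ℝ) : ∫ y in (0:ℝ)..1, 2 * Real.cos (2 * Real.pi * (a * y + t)) =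
    if a = 0 then 2 * Real.cos (2 * Real.pi * t) else 0 := by
  split_ifs with h
  · subst h; simp
  · have hc : (2 * Real.pi * a : ℝ) ≠ 0 := by
      have : (a : ℝ) ≠ 0 := by exact_mod_cast h
      positivity
    have : ∀ y : ℝ, 2 * Real.pi * (a * y + t) = (2 * Real.pi * a) * y + 2 * Real.pi * t := by
      intro y; ring
    simp only [this]
    rw [intervalIntegral.integral_const_mul,
      intervalIntegral.integral_comp_mul_add (fun z => Real.cos z) hc, integral_cos,
      show 2 * Real.pi * a * 1 + 2 * Real.pi * t = 2 * Real.pi * t + a * (2 * Real.pi) by ring,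
      Real.sin_add_int_mul_two_pi]
    simp

noncomputable def skE : C(ℝ × ℝ, ℝ) →ₗ[ℝ] ℝ where
  toFun f := ∫ x in (0:ℝ)..1, ∫ y in (0:ℝ)..1, f (x, y)
  map_add' f g := by
    have hy : ∀ (f : C(ℝ × ℝ, ℝ)) (x : ℝ), IntervalIntegrable (fun y => f (x, y)) volume 0 1 :=
      fun f x => Continuous.intervalIntegrable (by fun_prop) _ _
    have hx : ∀ (f : C(ℝ × ℝ, ℝ)), IntervalIntegrable (fun x => ∫ y in (0:ℝ)..1, f (x, y)) volume 0 1 :=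
      fun f => Continuous.intervalIntegrable
        (intervalIntegral.continuous_parametric_intervalIntegral_of_continuous'
          (f := fun x y => f (x, y)) (by simpa [Function.uncurry_def] using f.continuous) 0 1) _ _
    simp only [ContinuousMap.add_apply]
    rw [← intervalIntegral.integral_add (hx f) (hx g)]
    congr 1; ext x
    rw [intervalIntegral.integral_add (hy f x) (hy g x)]
  map_smul' c f := by
    simp [intervalIntegral.integral_const_mul]

noncomputable def skC (c : ℝ) (a b : ℤ) : C(ℝ × ℝ, ℝ) :=
  ⟨fun p => 2 * Real.cos (2 * Real.pi * (c + a * p.2 + b * p.1)), by fun_prop⟩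

lemma skE_C (c : ℝ) (a b : ℤ) : skE (skC c a b) =
    if a = 0 ∧ b = 0 then 2 * Real.cos (2 * Real.pi * c) else 0 := by
  have h1 : ∀ x : ℝ, ∫ y in (0:ℝ)..1, skC c a b (x, y) =
      if a = 0 then 2 * Real.cos (2 * Real.pi * (b * x + c)) else 0 := by
    intro x
    rw [← int_cos]
    congr 1; ext y
    simp only [skC, ContinuousMap.coe_mk]
    congr 3; ring
  change ∫ x in (0:ℝ)..1, ∫ y in (0:ℝ)..1, skC c a b (x, y) = _
  simp only [h1]
  by_cases ha : a = 0
  · simp only [ha, if_true, true_and]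
    rw [int_cos]
  · simp [ha]

noncomputable def skv (ω : ℝ) (j : ℕ) : C(ℝ × ℝ, ℝ) := skC (skT j * ω) j 1

lemma cos_four (a b c d : ℝ) : (2 * Real.cos a) * (2 * Real.cos b) * (2 * Real.cos c) * (2 * Real.cos d)
    = 2 * Real.cos (a + b + c + d) + 2 * Real.cos (a + b + c - d) + 2 * Real.cos (a + b - c + d)
    + 2 * Real.cos (a - b + c + d) + 2 * Real.cos (a + b - c - d) + 2 * Real.cos (a + c - b - d)
    + 2 * Real.cos (a + d - b - c) + 2 * Real.cos (a - b - c - d) := by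
  simp only [Real.cos_add, Real.cos_sub, Real.sin_add, Real.sin_sub]; ring

lemma skv_four (ω : ℝ) (i j k l : ℕ) : skv ω i * skv ω j * skv ω k * skv ω l =
    skC ((skT i + skT j + skT k + skT l) * ω) (i + j + k + l) 4 +
    skC ((skT i + skT j + skT k - skT l) * ω) (i + j + k - l) 2 +
    skC ((skT i + skT j - skT k + skT l) * ω) (i + j - k + l) 2 +
    skC ((skT i - skT j + skT k + skT l) * ω) (i - j + k + l) 2 +
    skC ((skT i + skT j - skT k - skT l) * ω) (i + j - k - l) 0 +
    skC ((skT i + skT k - skT j - skT l) * ω) (i + k - j - l) 0 +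
    skC ((skT i + skT l - skT j - skT k) * ω) (i + l - j - k) 0 +
    skC ((skT i - skT j - skT k - skT l) * ω) (i - j - k - l) (-2) := by
  ext p
  simp only [skv, skC, ContinuousMap.mul_apply, ContinuousMap.add_apply, ContinuousMap.coe_mk]
  rw [cos_four]
  push_cast
  congr 1
  · congr 1
    · congr 1
      · congr 1
        · congr 1
          · congr 1
            · congr 1
              · congr 2; ring
              · congr 2; ring
            · congr 2; ring
          · congr 2; ring
        · congr 2; ring
      · congr 2; ring
    · congr 2; ring
  · congr 2; ring

lemma skE_four (ω : ℝ) (i j k l : ℕ) :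
    skE (skv ω i * skv ω j * skv ω k * skv ω l) = skG ω i j k l := by
  rw [skv_four]
  simp only [map_add, skE_C]
  rw [skG]
  simp only [skc]
  norm_num
  congr 1
  · congr 1
    · congr 1
      apply propext; omega
    · congr 1
      apply propext; omega
  · congr 1
    apply propext; omega

lemma skE_four' (ω : ℝ) (i j k l : ℕ) :
    skE (skv ω (i + 1) * skv ω (j + 1) * skv ω (k + 1) * skv ω (l + 1)) = skG ω i j k l := by
  rw [skE_four, skG_shift]

/-- value of the continuant -/
noncomputable def skval (lam : ℝ) (p : Polynomial C(ℝ × ℝ, ℝ)) (x y : ℝ) : ℝ :=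
  (p.eval (ContinuousMap.const _ lam)) (x, y)

lemma skval_succ (lam : ℝ) (u : ℕ → C(ℝ × ℝ, ℝ)) (n : ℕ) (x y : ℝ) :
    skval lam (KK u (n + 2)) x y = -(u (n + 1) (x, y) * lam * skval lam (KK u (n + 1)) x y)
      - skval lam (KK u n) x y := by
  simp [skval, KK_succ]

lemma skv_apply (ω : ℝ) (j : ℕ) (x y : ℝ) : skv ω j (x, y) = v ω j x y := by
  simp [skv, skC, v, skT]

lemma M_eq (ω lam : ℝ) (x y : ℝ) (n : ℕ) : M ω lam (n + 1) x y =
    !![skval lam (KK (skv ω) (n + 2)) x y, -skval lam (KK (fun j => skv ω (j + 1)) (n + 1)) x y;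
       skval lam (KK (skv ω) (n + 1)) x y, -skval lam (KK (fun j => skv ω (j + 1)) n) x y] := by
  induction n with
  | zero =>
    rw [skval_succ, skv_apply]
    simp [M, A, skval, KK]
    ring
  | succ n ih =>
    rw [M, ih, A, Matrix.mul_fin_two, skval_succ lam _ (n + 1), skval_succ lam (fun j => skv ω (j + 1)) n,
      skv_apply]
    ext i j
    fin_cases i <;> fin_cases j <;> simp <;> ring

noncomputable def skTr (ω : ℝ) (n : ℕ) : Polynomial C(ℝ × ℝ, ℝ) :=
  (KK (skv ω) (n + 2)) ^ 2 + (KK (skv ω) (n + 1)) ^ 2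
    + (KK (fun j => skv ω (j + 1)) (n + 1)) ^ 2 + (KK (fun j => skv ω (j + 1)) n) ^ 2

lemma P_eq (ω lam : ℝ) (n : ℕ) : P ω (n + 1) lam =
    skE ((skTr ω n).eval (ContinuousMap.const _ lam)) := by
  change _ = ∫ x in (0:ℝ)..1, ∫ y in (0:ℝ)..1, _
  rw [P]
  congr 1; ext x; congr 1; ext y
  rw [M_eq]
  simp [Matrix.trace_fin_two, Matrix.mul_apply, Fin.sum_univ_two, skTr, skval]
  ring

lemma P_sum (ω lam : ℝ) (n : ℕ) : P ω (n + 1) lam =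
    ∑ k ∈ Finset.range (n + 2), skE ((skTr ω n).coeff (2 * k)) * lam ^ (2 * k) := by
  have hodd : ∀ d, d % 2 = 1 → (skTr ω n).coeff d = 0 := by
    intro d hd
    simp only [skTr, Polynomial.coeff_add]
    rw [KK_sq_odd _ _ _ hd, KK_sq_odd _ _ _ hd, KK_sq_odd _ _ _ hd, KK_sq_odd _ _ _ hd]; simp
  have hdeg : (skTr ω n).natDegree < 2 * (n + 2) := by
    suffices (skTr ω n).natDegree ≤ 2 * n + 2 by omega
    rw [Polynomial.natDegree_le_iff_coeff_eq_zero]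
    intro d hd
    simp only [skTr, Polynomial.coeff_add]
    rw [KK_sq_deg _ _ _ (by omega), KK_sq_deg _ _ _ (by omega), KK_sq_deg _ _ _ (by omega),
      KK_sq_deg _ _ _ (by omega)]; simp
  rw [P_eq, Polynomial.eval_eq_sum_range' hdeg, map_sum]
  have : ∀ m, ∑ i ∈ Finset.range (2 * m), skE ((skTr ω n).coeff i * (ContinuousMap.const _ lam) ^ i)
      = ∑ k ∈ Finset.range m, skE ((skTr ω n).coeff (2 * k)) * lam ^ (2 * k) := by
    intro m
    induction m with
    | zero => simp
    | succ m ih =>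
      rw [show 2 * (m + 1) = 2 * m + 1 + 1 by ring, Finset.sum_range_succ, Finset.sum_range_succ, ih,
        hodd (2 * m + 1) (by omega), Finset.sum_range_succ]
      have : (skTr ω n).coeff (2 * m) * (ContinuousMap.const _ lam) ^ (2 * m)
          = (lam ^ (2 * m)) • (skTr ω n).coeff (2 * m) := by
        ext p; simp; ring
      rw [this, map_smul]
      simp; ring
  exact this _

/-- `P_n` is an even polynomial in `λ` whose `λ⁴`-coefficient is given by the
quadratic Weyl sum formula
`α₄ = 4 ∑_{m=1}^{⌊n/2⌋} |∑_{l=1}^m e[ω(l²-l)]|² + 4 ∑_{m=1}^{⌊(n-1)/2⌋} |∑_{l=1}^m e[ω(l²-l)]|²`. -/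
theorem stmt_2 (ω : ℝ) (n : ℕ) (hn : 1 ≤ n) :
    ∃ α : ℕ → ℝ,
      (∀ lam' : ℝ, P ω n lam' = ∑ k ∈ Finset.range (n + 1), α k * lam' ^ (2 * k)) ∧
      α 2 =
        4 * ∑ m ∈ Finset.Icc 1 (n / 2),
            ‖∑ l ∈ Finset.Icc 1 m,
                Complex.exp (2 * (Real.pi : ℂ) * Complex.I * (ω : ℂ) *
                  ((l : ℂ) ^ 2 - (l : ℂ)))‖ ^ 2
          + 4 * ∑ m ∈ Finset.Icc 1 ((n - 1) / 2),
              ‖∑ l ∈ Finset.Icc 1 m,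
                  Complex.exp (2 * (Real.pi : ℂ) * Complex.I * (ω : ℂ) *
                    ((l : ℂ) ^ 2 - (l : ℂ)))‖ ^ 2 := by
  obtain ⟨n, rfl⟩ : ∃ m, n = m + 1 := ⟨n - 1, by omega⟩
  refine ⟨fun k => skE ((skTr ω n).coeff (2 * k)), fun lam => P_sum ω lam n, ?_⟩
  change skE ((skTr ω n).coeff 4) = 4 * ∑ m ∈ Finset.Icc 1 ((n + 1) / 2), ‖skW ω m‖ ^ 2 +
    4 * ∑ m ∈ Finset.Icc 1 ((n + 1 - 1) / 2), ‖skW ω m‖ ^ 2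
  have hE := skE_four ω
  have hE' : ∀ i j k l, skE ((fun j => skv ω (j + 1)) i * (fun j => skv ω (j + 1)) j *
    (fun j => skv ω (j + 1)) k * (fun j => skv ω (j + 1)) l) = skG ω i j k l := skE_four' ω
  simp only [skTr, Polynomial.coeff_add, map_add]
  rcases Nat.even_or_odd' n with ⟨N, rfl | rfl⟩
  · rw [show 2 * N + 2 = 2 * (N + 1) by ring, E_even _ _ ω hE, E_even _ _ ω hE', E_odd _ _ ω hE,
      E_odd _ _ ω hE', show (2 * N + 1) / 2 = N by omega, show (2 * N + 1 - 1) / 2 = N by omega]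
    ring
  · rw [show 2 * N + 1 + 2 = 2 * (N + 1) + 1 by ring, show 2 * N + 1 + 1 = 2 * (N + 1) by ring,
      E_even _ _ ω hE, E_even _ _ ω hE', E_odd _ _ ω hE,
      E_odd _ _ ω hE', show (2 * (N + 1)) / 2 = N + 1 by omega,
      show (2 * (N + 1) - 1) / 2 = N by omega]
    ring
end

section
/- There exist universal constants δ > 0 and C₀ > 0 and an integer n₀ ≥ 1 such that, for every integer n ≥ n₀, there exists a Lebesgue-measurable set Ω_n ⊆ [0,1] of Lebesgue measure at least δ with the property that for all ω ∈ Ω_n one has ∑_{m=1}^{n−1} |S_m(ω)|² ≥ C₀·n². -/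
open MeasureTheory Real

/-- The quadratic Weyl sum `S_m(ω) = ∑_{j=1}^m exp(2πiω(j²-j))`. -/
noncomputable def S (ω : ℝ) (m : ℕ) : ℂ :=
  ∑ j ∈ Finset.Icc 1 m,
    Complex.exp (2 * (Real.pi : ℂ) * Complex.I * (ω : ℂ) * ((j : ℂ) ^ 2 - (j : ℂ)))

lemma aux_abel (s w : ℕ → ℂ) (m : ℕ) :
    ∑ j ∈ Finset.range m, s j * w j = w m * ∑ j ∈ Finset.range m, s j
      - ∑ k ∈ Finset.range m, (w (k+1) - w k) * ∑ j ∈ Finset.range (k+1), s j := by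
  induction m with
  | zero => simp
  | succ m ih =>
    rw [Finset.sum_range_succ, ih, Finset.sum_range_succ (fun k => (w (k+1) - w k) * _),
      Finset.sum_range_succ s m]
    ring

lemma S_range (ω : ℝ) (m : ℕ) : S ω m = ∑ j ∈ Finset.range m,
    Complex.exp (2 * (Real.pi : ℂ) * Complex.I * (ω : ℂ) * ((j : ℂ) * (j+1))) := by
  induction m with
  | zero => simp [S]
  | succ m ih =>
    rw [Finset.sum_range_succ, ← ih]
    unfold S
    rw [Finset.sum_Icc_succ_top (by omega)]
    congr 2
    push_cast
    ring

lemma gauss_norm (q : ℕ) [NeZero q] (a : ℕ) (hq : Odd q) (ha : Nat.Coprime a q) :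
    ‖∑ x : ZMod q, ZMod.stdAddChar ((a : ZMod q) * (x * (x+1)))‖ ^ 2 = q := by
  have h2 : IsUnit ((2 * a : ℕ) : ZMod q) := by
    rw [ZMod.isUnit_iff_coprime]
    exact Nat.Coprime.mul_left (Nat.coprime_two_left.mpr hq) ha
  have key : (∑ x : ZMod q, ZMod.stdAddChar ((a : ZMod q) * (x * (x+1)))) *
      (starRingEnd ℂ) (∑ x : ZMod q, ZMod.stdAddChar ((a : ZMod q) * (x * (x+1)))) = (q : ℂ) := by
    rw [map_sum, Finset.mul_sum]
    have : ∀ y : ZMod q, (∑ x : ZMod q, ZMod.stdAddChar ((a : ZMod q) * (x * (x+1)))) *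
        (starRingEnd ℂ) (ZMod.stdAddChar ((a : ZMod q) * (y * (y+1)))) =
        ∑ h : ZMod q, ZMod.stdAddChar ((a : ZMod q) * (h * (h+1))) *
          ZMod.stdAddChar (y * (((2 * a : ℕ) : ZMod q) * h)) := by
      intro y
      rw [Finset.sum_mul, ← Equiv.sum_comp (Equiv.addRight y)]
      apply Finset.sum_congr rfl
      intro h _
      rw [← AddChar.map_neg_eq_conj, ← AddChar.map_add_eq_mul, ← AddChar.map_add_eq_mul]
      congr 1
      simp only [Equiv.coe_addRight]
      push_cast
      ring
    rw [Finset.sum_congr rfl (fun y _ => this y), Finset.sum_comm]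
    simp_rw [← Finset.mul_sum, AddChar.sum_mulShift _ (ZMod.isPrimitive_stdAddChar q)]
    rw [Finset.sum_eq_single 0]
    · simp [ZMod.card]
    · intro b _ hb
      rw [if_neg, Nat.cast_zero, mul_zero]
      intro h
      exact hb ((h2.mul_right_eq_zero).1 h)
    · simp
  rw [Complex.mul_conj, Complex.normSq_eq_norm_sq] at key
  exact_mod_cast key

lemma S_rat (q : ℕ) [NeZero q] (a m : ℕ) : S ((a:ℝ)/q) m = ∑ j ∈ Finset.range m,
    ZMod.stdAddChar ((a : ZMod q) * ((j : ZMod q) * ((j : ZMod q)+1))) := by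
  rw [S_range]
  apply Finset.sum_congr rfl
  intro j _
  have := ZMod.stdAddChar_coe (N := q) ((a : ℤ) * (j * (j+1)))
  push_cast at this
  rw [this]
  congr 1
  push_cast
  ring

lemma sum_period (q : ℕ) [NeZero q] (F : ZMod q → ℂ) (m : ℕ) :
    ∑ j ∈ Finset.range (m+q), F j = ∑ j ∈ Finset.range m, F j + ∑ x, F x := by
  induction m with
  | zero =>
    simp only [zero_add, Finset.range_zero, Finset.sum_empty]
    refine Finset.sum_nbij' (fun j => (j : ZMod q)) (fun x => x.val) ?_ ?_ ?_ ?_ ?_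
    · simp
    · intro x _; simp [ZMod.val_lt]
    · intro j hj; simp at hj; exact ZMod.val_cast_of_lt hj
    · simp
    · simp
  | succ m ih =>
    rw [show m + 1 + q = m + q + 1 by ring, Finset.sum_range_succ, ih, Finset.sum_range_succ]
    simp
    ring

lemma T_lower (n q a : ℕ) [NeZero q] (hq : Odd q) (ha : Nat.Coprime a q) (hn : 2 * q ≤ n)
    (hq2 : n ≤ 16 * q) (h4 : 4 ≤ n) :
    (n:ℝ)^2/256 ≤ ∑ m ∈ Finset.Icc 1 (n-1), ‖S ((a:ℝ)/q) m‖^2 := by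
  set T := S ((a:ℝ)/q) with hT
  set G := ∑ x : ZMod q, ZMod.stdAddChar ((a : ZMod q) * (x * (x+1))) with hG
  have hper : ∀ m, T (m+q) = T m + G := by
    intro m
    rw [hT, S_rat, S_rat, hG]
    exact sum_period q (fun x => ZMod.stdAddChar ((a : ZMod q) * (x * (x+1)))) m
  have hg : ‖G‖^2 = q := gauss_norm q a hq ha
  have h1 : ∀ m, (q:ℝ)/2 ≤ ‖T (m+q)‖^2 + ‖T m‖^2 := by
    intro m
    have : G = T (m+q) - T m := by rw [hper]; ring
    have h := norm_sub_le (T (m+q)) (T m)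
    rw [← this] at h
    have h0 := norm_nonneg G
    nlinarith [sq_nonneg (‖T (m+q)‖ - ‖T m‖)]
  have hs1 : ∑ m ∈ Finset.Icc 1 (n-1-q), ‖T m‖^2 ≤ ∑ m ∈ Finset.Icc 1 (n-1), ‖T m‖^2 := by
    apply Finset.sum_le_sum_of_subset_of_nonneg
    · apply Finset.Icc_subset_Icc le_rfl; omega
    · intros; positivity
  have hs2 : ∑ m ∈ Finset.Icc 1 (n-1-q), ‖T (m+q)‖^2 ≤ ∑ m ∈ Finset.Icc 1 (n-1), ‖T m‖^2 := by
    rw [← Finset.sum_image (s := Finset.Icc 1 (n-1-q)) (g := fun m => m+q) (f := fun m => ‖T m‖^2)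
      (by intro x _ y _ h; simpa using h)]
    apply Finset.sum_le_sum_of_subset_of_nonneg
    · intro x hx
      simp only [Finset.mem_image, Finset.mem_Icc] at hx ⊢
      omega
    · intros; positivity
  have hs3 : ((n-1-q : ℕ):ℝ) * ((q:ℝ)/2) ≤ ∑ m ∈ Finset.Icc 1 (n-1-q), (‖T (m+q)‖^2 + ‖T m‖^2) := by
    have := Finset.card_nsmul_le_sum (Finset.Icc 1 (n-1-q)) (fun m => ‖T (m+q)‖^2 + ‖T m‖^2) ((q:ℝ)/2)
      (fun m _ => h1 m)
    simpa using this
  rw [Finset.sum_add_distrib] at hs3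
  have hc : (n:ℝ)/4 ≤ ((n-1-q : ℕ):ℝ) := by
    have : n ≤ 4 * (n-1-q) := by omega
    have : (n:ℝ) ≤ 4 * ((n-1-q:ℕ):ℝ) := by exact_mod_cast this
    linarith
  have hq3 : (n:ℝ) ≤ 16 * q := by exact_mod_cast hq2
  have : (n:ℝ)/4 * ((n:ℝ)/32) ≤ ((n-1-q : ℕ):ℝ) * ((q:ℝ)/2) := by
    apply mul_le_mul hc _ (by positivity) (by positivity)
    linarith
  nlinarith

lemma pert (n : ℕ) (hn : 1 ≤ n) (ω α : ℝ) (h1 : α ≤ ω) (h2 : ω - α ≤ 1/(n:ℝ)^2) :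
    ∑ m ∈ Finset.Icc 1 (n-1), ‖S α m‖^2 ≤ 514 * ∑ m ∈ Finset.Icc 1 (n-1), ‖S ω m‖^2 := by
  set X := ∑ m ∈ Finset.Icc 1 (n-1), ‖S ω m‖^2 with hX
  have hX0 : 0 ≤ X := by positivity
  have hn0 : (0:ℝ) < n := by exact_mod_cast hn
  set w : ℕ → ℂ := fun j => Complex.exp (Complex.I * ((-(2 * π * (ω - α) * (j * (j+1))) : ℝ) : ℂ)) with hw
  have hwn : ∀ j, ‖w j‖ = 1 := by
    intro j; rw [hw]; simp only []; rw [mul_comm, Complex.norm_exp_ofReal_mul_I]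
  have hwd : ∀ j, j + 1 < n → ‖w (j+1) - w j‖ ≤ 16 / n := by
    intro j hj
    have e : w (j+1) - w j = w j * (Complex.exp (Complex.I * ((-(2*π*(ω-α)*(2*(j+1))) : ℝ):ℂ)) - 1) := by
      rw [mul_sub, mul_one, hw]
      simp only []
      rw [← Complex.exp_add]
      congr 2
      push_cast
      ring
    rw [e, norm_mul, hwn, one_mul]
    refine (Real.norm_exp_I_mul_ofReal_sub_one_le).trans ?_
    rw [norm_neg, Real.norm_of_nonneg (by have := Real.pi_pos; have : 0 ≤ ω - α := by linarith
                                          positivity)]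
    have hj' : (j:ℝ)+1 ≤ n := by exact_mod_cast hj.le
    have : (ω - α) * (j+1) ≤ 1/(n:ℝ)^2 * n := by
      apply mul_le_mul h2 hj' (by positivity) (by positivity)
    have e2 : 1/(n:ℝ)^2 * n = 1/n := by field_simp
    rw [e2] at this
    have hp := Real.pi_le_four
    calc 2*π*(ω-α)*(2*(j+1)) = 4 * π * ((ω-α)*(j+1)) := by ring
      _ ≤ 16 * (1/n) := by
        apply mul_le_mul (by linarith) this _ (by norm_num)
        have : 0 ≤ ω - α := by linarith
        positivity
      _ = 16/n := by ring
  have hT : ∀ m ∈ Finset.Icc 1 (n-1), ‖S α m‖^2 ≤ 2 * ‖S ω m‖^2 + 512 / n * X := by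
    intro m hm
    simp only [Finset.mem_Icc] at hm
    have e1 : S α m = w m * S ω m - ∑ k ∈ Finset.range m, (w (k+1) - w k) * S ω (k+1) := by
      simp_rw [S_range ω]
      rw [← aux_abel, S_range]
      apply Finset.sum_congr rfl
      intro j _
      rw [hw]; simp only []
      rw [← Complex.exp_add]
      congr 1
      push_cast
      ring
    have e2 : ‖∑ k ∈ Finset.range m, (w (k+1) - w k) * S ω (k+1)‖ ≤
        16/n * ∑ k ∈ Finset.Icc 1 (n-1), ‖S ω k‖ := by
      refine (norm_sum_le _ _).trans ?_
      calc ∑ k ∈ Finset.range m, ‖(w (k+1) - w k) * S ω (k+1)‖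
          ≤ ∑ k ∈ Finset.range m, 16/n * ‖S ω (k+1)‖ := by
            apply Finset.sum_le_sum
            intro k hk
            rw [norm_mul]
            apply mul_le_mul_of_nonneg_right (hwd k _) (norm_nonneg _)
            simp at hk; omega
        _ = ∑ k ∈ (Finset.range m).image (fun k => k+1), 16/n * ‖S ω k‖ := by
            rw [Finset.sum_image (by intro x _ y _ h; simpa using h)]
        _ ≤ ∑ k ∈ Finset.Icc 1 (n-1), 16/n * ‖S ω k‖ := by
            apply Finset.sum_le_sum_of_subset_of_nonneg
            · intro x hx
              simp only [Finset.mem_image, Finset.mem_range, Finset.mem_Icc] at hx ⊢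
              omega
            · intros; positivity
        _ = _ := by rw [Finset.mul_sum]
    set Y := ∑ k ∈ Finset.Icc 1 (n-1), ‖S ω k‖ with hY
    have hY0 : 0 ≤ Y := by positivity
    have hY2 : Y^2 ≤ n * X := by
      have := sq_sum_le_card_mul_sum_sq (s := Finset.Icc 1 (n-1)) (f := fun k => ‖S ω k‖)
      simp only [Nat.card_Icc, Nat.add_sub_cancel] at this
      refine this.trans ?_
      apply mul_le_mul_of_nonneg_right _ hX0
      exact_mod_cast Nat.sub_le n 1
    have e3 : ‖S α m‖ ≤ ‖S ω m‖ + 16/n * Y := by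
      rw [e1]
      refine (norm_sub_le _ _).trans ?_
      rw [norm_mul, hwn, one_mul]
      linarith
    have e4 : (16/n * Y)^2 ≤ 256/n * X := by
      calc (16/n * Y)^2 = 256/(n:ℝ)^2 * Y^2 := by ring
        _ ≤ 256/(n:ℝ)^2 * (n*X) := by gcongr
        _ = 256/n * X := by field_simp
    have e5 : 512 / n * X = 2 * (256/n * X) := by ring
    rw [e5]
    have := norm_nonneg (S α m)
    nlinarith [sq_nonneg (‖S ω m‖ - 16/n * Y)]
  refine (Finset.sum_le_sum hT).trans ?_
  rw [Finset.sum_add_distrib, ← Finset.mul_sum, Finset.sum_const, Nat.card_Icc, Nat.add_sub_cancel,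
    nsmul_eq_mul, ← hX]
  have : ((n-1:ℕ):ℝ) * (512/n*X) ≤ n * (512/n*X) := by
    apply mul_le_mul_of_nonneg_right _ (by positivity)
    exact_mod_cast Nat.sub_le n 1
  have e : (n:ℝ) * (512/n*X) = 512 * X := by field_simp
  linarith

def goodP (A : ℕ) : Finset (ℕ × ℕ) :=
  ((Finset.Icc 1 (2*A)) ×ˢ (Finset.Ico A (4*A))).filter (fun p => Nat.Coprime p.1 (2*p.2+1))

lemma tele (N : ℕ) : ∑ e ∈ Finset.range N, (1:ℝ)/((2*e+3:ℕ):ℝ)^2 ≤ 1/4 := by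
  have : ∀ N : ℕ, ∑ e ∈ Finset.range N, (1:ℝ)/((2*e+3:ℕ):ℝ)^2 ≤ 1/4 - 1/(4*(N+1)) := by
    intro N
    induction N with
    | zero => simp
    | succ N ih =>
      rw [Finset.sum_range_succ]
      have : (1:ℝ)/((2*N+3:ℕ):ℝ)^2 ≤ 1/(4*(N+1)) - 1/(4*(N+1+1)) := by
        rw [div_sub_div _ _ (by positivity) (by positivity), div_le_div_iff₀ (by positivity) (by positivity)]
        push_cast
        nlinarith [(Nat.cast_nonneg N : (0:ℝ) ≤ N)]
      push_cast at *
      linarith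
  refine (this N).trans ?_
  have : (0:ℝ) ≤ 1/(4*(N+1)) := by positivity
  linarith

lemma card_good (A : ℕ) : 2 * A^2 ≤ (goodP A).card := by
  set P := (Finset.Icc 1 (2*A)) ×ˢ (Finset.Ico A (4*A)) with hP
  set B := P.filter (fun p => ¬ Nat.Coprime p.1 (2*p.2+1)) with hB
  have hcard : (goodP A).card + B.card = 6 * A^2 := by
    rw [goodP, hB, Finset.card_filter_add_card_filter_not, Finset.card_product]
    simp
    have : 4 * A - A = 3 * A := by omega
    rw [this]; ring
  have hBs : B ⊆ (Finset.range (2*A)).biUnion (fun e =>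
      P.filter (fun p => (2*e+3) ∣ p.1 ∧ (2*e+3) ∣ (2*p.2+1))) := by
    intro p hp
    rw [hB, Finset.mem_filter] at hp
    obtain ⟨hp, hc⟩ := hp
    rw [Finset.mem_biUnion]
    have d1 := Nat.gcd_dvd_left p.1 (2*p.2+1)
    have d2 := Nat.gcd_dvd_right p.1 (2*p.2+1)
    unfold Nat.Coprime at hc
    set d := Nat.gcd p.1 (2*p.2+1)
    have hodd : Odd d := Odd.of_dvd_nat ⟨p.2, rfl⟩ d2
    obtain ⟨k, hk⟩ := hodd
    have hm := hp
    rw [hP, Finset.mem_product, Finset.mem_Icc, Finset.mem_Ico] at hm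
    have hle := Nat.le_of_dvd (by omega) d1
    refine ⟨k-1, by simp; omega, ?_⟩
    rw [Finset.mem_filter]
    have : 2*(k-1)+3 = d := by omega
    rw [this]
    exact ⟨hp, d1, d2⟩
  have hone : ∀ e ∈ Finset.range (2*A), ((P.filter (fun p => (2*e+3) ∣ p.1 ∧ (2*e+3) ∣ (2*p.2+1))).card : ℝ)
      ≤ 16*(A:ℝ)^2 * (1/((2*e+3:ℕ):ℝ)^2) := by
    intro e _
    set d := 2*e+3
    have : (P.filter (fun p => d ∣ p.1 ∧ d ∣ (2*p.2+1))).card ≤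
        (((Finset.Ioc 0 (2*A)).filter (fun x => d ∣ x)) ×ˢ ((Finset.Ioc 0 (8*A)).filter (fun x => d ∣ x))).card := by
      apply Finset.card_le_card_of_injOn (fun p => (p.1, 2*p.2+1))
      · intro p hp
        simp only [hP, Finset.coe_filter, Set.mem_ofPred_eq, Finset.mem_product, Finset.mem_Icc, Finset.mem_Ico,
          Finset.coe_product, Set.mem_prod, Finset.mem_Ioc] at hp ⊢
        refine ⟨⟨by omega, hp.2.1⟩, ⟨by omega, hp.2.2⟩⟩
      · rintro ⟨x, y⟩ _ ⟨x', y'⟩ _ h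
        simp at h ⊢
        omega
    rw [Finset.card_product, Nat.Ioc_filter_dvd_card_eq_div, Nat.Ioc_filter_dvd_card_eq_div] at this
    have h' : ((P.filter (fun p => d ∣ p.1 ∧ d ∣ (2*p.2+1))).card : ℝ) ≤ ((2*A/d:ℕ):ℝ) * ((8*A/d:ℕ):ℝ) := by
      exact_mod_cast this
    refine h'.trans ?_
    have a1 : ((2*A/d:ℕ):ℝ) ≤ ((2*A:ℕ):ℝ)/d := Nat.cast_div_le
    have a2 : ((8*A/d:ℕ):ℝ) ≤ ((8*A:ℕ):ℝ)/d := Nat.cast_div_le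
    refine (mul_le_mul a1 a2 (by positivity) (by positivity)).trans ?_
    push_cast
    apply le_of_eq
    ring
  have hb : (B.card : ℝ) ≤ 4 * (A:ℝ)^2 := by
    have h1 := (Finset.card_le_card hBs).trans Finset.card_biUnion_le
    have h2 : (B.card : ℝ) ≤ ∑ e ∈ Finset.range (2*A), ((P.filter (fun p => (2*e+3) ∣ p.1 ∧ (2*e+3) ∣ (2*p.2+1))).card : ℝ) := by
      exact_mod_cast h1
    have h3 := h2.trans (Finset.sum_le_sum hone)
    rw [← Finset.mul_sum] at h3
    have := tele (2*A)
    nlinarith [sq_nonneg (A:ℝ)]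
  have hb' : B.card ≤ 4 * A^2 := by exact_mod_cast hb
  omega

lemma arcs_disj (n a q a' q' : ℕ) (hn : 0 < n) (hq : 0 < q) (hq' : 0 < q') (h : 2*q ≤ n) (h' : 2*q' ≤ n)
    (hne : a * q' < a' * q) (x : ℝ) (h1 : x < (a:ℝ)/q + 1/(n:ℝ)^2) (h2 : (a':ℝ)/q' ≤ x) : False := by
  have r1 : (a:ℝ)*q' + 1 ≤ a' * q := by exact_mod_cast hne
  have p0 : (0:ℝ) < n := by exact_mod_cast hn
  have p1 : (0:ℝ) < q := by exact_mod_cast hq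
  have p2 : (0:ℝ) < q' := by exact_mod_cast hq'
  have e1 : (2:ℝ) * q ≤ n := by exact_mod_cast h
  have e2 : (2:ℝ) * q' ≤ n := by exact_mod_cast h'
  have h3 : (a:ℝ)/q + 1/(q*q') ≤ (a':ℝ)/q' := by
    rw [div_add_div _ _ p1.ne' (by positivity), div_le_div_iff₀ (by positivity) p2]
    have : (a * ((q:ℝ)*q') + q * 1) * q' = (a * q' + 1) * (q * q') := by ring
    rw [this]
    have : (a':ℝ) * (q * (q*q')) = (a'*q) * (q*q') := by ring
    rw [this]
    gcongr
  have h4 : 1/(n:ℝ)^2 ≤ 1/(q*q') := by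
    apply one_div_le_one_div_of_le (by positivity)
    nlinarith
  linarith

theorem stmt_7 :
    ∃ δ > (0 : ℝ), ∃ C₀ > (0 : ℝ), ∃ n₀ : ℕ, 1 ≤ n₀ ∧
      ∀ n : ℕ, n₀ ≤ n →
        ∃ Ω : Set ℝ, Ω ⊆ Set.Icc 0 1 ∧ MeasurableSet Ω ∧
          ENNReal.ofReal δ ≤ volume Ω ∧
          ∀ ω ∈ Ω, C₀ * (n : ℝ) ^ 2 ≤ ∑ m ∈ Finset.Icc 1 (n - 1), ‖S ω m‖ ^ 2 := by
  refine ⟨1/512, by norm_num, 1/(256*514), by norm_num, 16, by norm_num, ?_⟩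
  intro n hn
  obtain ⟨A, hA1, hA2, hA3⟩ : ∃ A : ℕ, 16 * A ≤ n ∧ n ≤ 32 * A ∧ 1 ≤ A := ⟨n/16, by omega, by omega, by omega⟩
  have hn0 : (0:ℝ) < n := by exact_mod_cast (by omega : 0 < n)
  set I : ℕ × ℕ → Set ℝ := fun p => Set.Ico ((p.1:ℝ)/((2*p.2+1:ℕ):ℝ)) ((p.1:ℝ)/((2*p.2+1:ℕ):ℝ) + 1/(n:ℝ)^2) with hI
  have hmem : ∀ p ∈ goodP A, 1 ≤ p.1 ∧ p.1 ≤ 2*A ∧ A ≤ p.2 ∧ p.2 < 4*A ∧ Nat.Coprime p.1 (2*p.2+1) := by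
    intro p hp
    simp only [goodP, Finset.mem_filter, Finset.mem_product, Finset.mem_Icc, Finset.mem_Ico] at hp
    tauto
  refine ⟨⋃ p ∈ goodP A, I p, ?_, ?_, ?_, ?_⟩
  · intro x hx
    simp only [Set.mem_iUnion] at hx
    obtain ⟨p, hp, hx⟩ := hx
    obtain ⟨h1, h2, h3, h4, h5⟩ := hmem p hp
    rw [hI] at hx
    simp only [Set.mem_Ico] at hx
    refine ⟨le_trans (by positivity) hx.1, ?_⟩
    by_contra hlt
    push Not at hlt
    exact arcs_disj n p.1 (2*p.2+1) 1 1 (by omega) (by omega) one_pos (by omega) (by omega) (by omega) x hx.2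
      (by simpa using hlt.le)
  · apply Finset.measurableSet_biUnion
    intro p _
    exact measurableSet_Ico
  · rw [measure_biUnion_finset]
    · simp only [hI, Real.volume_Ico, add_sub_cancel_left, Finset.sum_const]
      rw [← ENNReal.ofReal_nsmul]
      apply ENNReal.ofReal_le_ofReal
      rw [nsmul_eq_mul, mul_one_div, div_le_div_iff₀ (by norm_num) (by positivity)]
      have h1 : (2:ℝ) * (A:ℝ)^2 ≤ (goodP A).card := by exact_mod_cast card_good A
      have h2 : (n:ℝ) ≤ 32 * A := by exact_mod_cast hA2
      nlinarith
    · intro p hp p' hp' hne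
      obtain ⟨h1, h2, h3, h4, h5⟩ := hmem p hp
      obtain ⟨h1', h2', h3', h4', h5'⟩ := hmem p' hp'
      rw [Function.onFun, Set.disjoint_left]
      intro x hx hx'
      simp only [hI, Set.mem_Ico] at hx hx'
      rcases lt_trichotomy (p.1 * (2*p'.2+1)) (p'.1 * (2*p.2+1)) with h | h | h
      · exact arcs_disj n _ _ _ _ (by omega) (by omega) (by omega) (by omega) (by omega) h x hx.2 hx'.1
      · apply hne
        have d1 : p.1 ∣ p'.1 := h5.dvd_of_dvd_mul_right ⟨_, h.symm⟩
        have d2 : p'.1 ∣ p.1 := h5'.dvd_of_dvd_mul_right ⟨_, h⟩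
        have e := Nat.dvd_antisymm d1 d2
        rw [e] at h
        have := Nat.eq_of_mul_eq_mul_left (by omega) h
        exact Prod.ext e (by omega)
      · exact arcs_disj n _ _ _ _ (by omega) (by omega) (by omega) (by omega) (by omega) h x hx'.2 hx.1
    · intro p _
      exact measurableSet_Ico
  · intro ω hω
    simp only [Set.mem_iUnion] at hω
    obtain ⟨p, hp, hx⟩ := hω
    obtain ⟨h1, h2, h3, h4, h5⟩ := hmem p hp
    simp only [hI, Set.mem_Ico] at hx
    have t := T_lower n (2*p.2+1) p.1 ⟨p.2, rfl⟩ h5 (by omega) (by omega) (by omega)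
    have u := pert n (by omega) ω _ hx.1 (by linarith)
    linarith
end

section
/- There exist universal constants δ > 0 and C₀ > 0 such that for every strictly increasing sequence (n_k)_{k≥1} of positive integers there exists a Lebesgue-measurable set Ω ⊆ [0,1] of Lebesgue measure at least δ such that, for every ω ∈ Ω, there are infinitely many indices k for which ∑_{m=1}^{n_k − 1} |S_m(ω)|² ≥ C₀·n_k². -/
open MeasureTheory Real

lemma gauss_sq (q : ℕ) [NeZero q] (a c : ZMod q) :
    ((‖∑ x : ZMod q, ZMod.stdAddChar (a * x ^ 2 + c * x)‖ ^ 2 : ℝ) : ℂ) =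
      ∑ h : ZMod q, if 2 * a * h = 0 then (q : ℂ) * ZMod.stdAddChar (a * h ^ 2 + c * h) else 0 := by
  push_cast
  rw [← Complex.conj_mul', map_sum, Finset.sum_mul]
  have h1 : ∀ y : ZMod q, (starRingEnd ℂ) (ZMod.stdAddChar (a * y ^ 2 + c * y)) *
      ∑ x : ZMod q, ZMod.stdAddChar (a * x ^ 2 + c * x) =
      ∑ h : ZMod q, ZMod.stdAddChar (a * h ^ 2 + c * h) * ZMod.stdAddChar (y * (2 * a * h)) := by
    intro y
    rw [← AddChar.map_neg_eq_conj, Finset.mul_sum, ← Equiv.sum_comp (Equiv.addRight y)]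
    refine Finset.sum_congr rfl fun h _ => ?_
    rw [← AddChar.map_add_eq_mul, ← AddChar.map_add_eq_mul]
    congr 1
    simp only [Equiv.coe_addRight]
    ring
  rw [Finset.sum_congr rfl fun y _ => h1 y, Finset.sum_comm]
  refine Finset.sum_congr rfl fun h _ => ?_
  rw [← Finset.mul_sum, AddChar.sum_mulShift _ (ZMod.isPrimitive_stdAddChar q)]
  split_ifs
  · rw [ZMod.card, mul_comm]
  · simp

lemma gauss_add (q : ℕ) [NeZero q] (a : ZMod q) (ha : IsUnit a) :
    ‖∑ x : ZMod q, ZMod.stdAddChar (a * x ^ 2 + (-a) * x)‖ ^ 2 +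
    ‖∑ x : ZMod q, ZMod.stdAddChar (a * x ^ 2 + (1 - a) * x)‖ ^ 2 = 2 * (q : ℝ) := by
  have : ((‖∑ x : ZMod q, ZMod.stdAddChar (a * x ^ 2 + (-a) * x)‖ ^ 2 +
    ‖∑ x : ZMod q, ZMod.stdAddChar (a * x ^ 2 + (1 - a) * x)‖ ^ 2 : ℝ) : ℂ) = ((2 * (q : ℝ) : ℝ) : ℂ) := by
    rw [Complex.ofReal_add, gauss_sq, gauss_sq, ← Finset.sum_add_distrib,
      Finset.sum_eq_single (0 : ZMod q)]
    · simp; ring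
    · intro h _ hh
      split_ifs with h2
      · have h3 : h + h = 0 := by
          have : a * (h + h) = 0 := by rw [← h2]; ring
          exact (ha.mul_right_eq_zero).1 this
        have h4 : (ZMod.stdAddChar h : ℂ) * ZMod.stdAddChar h = 1 := by
          rw [← AddChar.map_add_eq_mul, h3, AddChar.map_zero_eq_one]
        have h5 : (ZMod.stdAddChar h : ℂ) ≠ 1 := by
          intro h6
          rw [← AddChar.map_zero_eq_one (ZMod.stdAddChar (N := q))] at h6
          exact hh (ZMod.injective_stdAddChar h6)
        have h7 : (ZMod.stdAddChar h : ℂ) = -1 := (mul_self_eq_one_iff.1 h4).resolve_left h5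
        have h8 : a * h ^ 2 + (1 - a) * h = (a * h ^ 2 + (-a) * h) + h := by ring
        rw [h8, AddChar.map_add_eq_mul _ _ h, h7]; ring
      · simp
    · simp
  exact_mod_cast this

lemma window_sum (q : ℕ) [NeZero q] (F : ZMod q → ℂ) (m : ℕ) :
    ∑ i ∈ Finset.range q, F ((m + i : ℕ) : ZMod q) = ∑ x, F x := by
  rw [← Equiv.sum_comp (Equiv.addLeft (m : ZMod q))]
  symm
  refine Finset.sum_bij' (fun x _ => x.val) (fun i _ => (i : ZMod q)) ?_ ?_ ?_ ?_ ?_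
  · intro x _; simpa using ZMod.val_lt x
  · simp
  · simp
  · intro i hi; exact ZMod.val_cast_of_lt (by simpa using hi)
  · intro x _; simp

lemma abel (T u : ℕ → ℂ) (L : ℕ) : ∑ i ∈ Finset.range L, u i * (T (i+1) - T i) =
    u L * T L - u 0 * T 0 - ∑ i ∈ Finset.range L, (u (i+1) - u i) * T (i+1) := by
  induction L with
  | zero => simp
  | succ L ih => rw [Finset.sum_range_succ, ih, Finset.sum_range_succ]; ring

lemma abel_bound (T u : ℕ → ℂ) (L : ℕ) (ε : ℝ) (hu : ∀ i, ‖u i‖ = 1)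
    (hd : ∀ i < L, ‖u (i+1) - u i‖ ≤ ε) :
    ‖∑ i ∈ Finset.range L, u i * (T (i+1) - T i)‖ ≤
    ‖T L‖ + ‖T 0‖ + ε * ∑ i ∈ Finset.range L, ‖T (i+1)‖ := by
  rw [abel]
  refine (norm_sub_le _ _).trans (add_le_add ((norm_sub_le _ _).trans ?_) ?_)
  · simp [hu]
  · rw [Finset.mul_sum]
    refine (norm_sum_le _ _).trans (Finset.sum_le_sum fun i hi => ?_)
    rw [norm_mul]
    exact mul_le_mul_of_nonneg_right (hd i (by simpa using hi)) (norm_nonneg _)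

noncomputable def ee (x : ℝ) : ℂ := Complex.exp (2 * (Real.pi : ℂ) * Complex.I * (x : ℂ))

lemma ee_add (x y : ℝ) : ee (x + y) = ee x * ee y := by
  unfold ee; rw [← Complex.exp_add]; congr 1; push_cast; ring

lemma ee_eq (x : ℝ) : ee x = Complex.exp (((2 * Real.pi * x : ℝ) : ℂ) * Complex.I) := by
  unfold ee; congr 1; push_cast; ring

lemma ee_norm (x : ℝ) : ‖ee x‖ = 1 := by
  rw [ee_eq, Complex.norm_exp_ofReal_mul_I]

lemma ee_sub_one (x : ℝ) : ‖ee x - 1‖ ≤ 2 * Real.pi * |x| := by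
  rw [ee_eq, mul_comm, Complex.norm_exp_I_mul_ofReal_sub_one, norm_mul]
  have := Real.abs_sin_le_abs (x := 2 * Real.pi * x / 2)
  simp only [Real.norm_eq_abs] at *
  refine (mul_le_mul_of_nonneg_left this (abs_nonneg _)).trans (le_of_eq ?_)
  rw [← abs_mul, show 2 * (2 * Real.pi * x / 2) = (2 * Real.pi) * x by ring, abs_mul,
    abs_of_pos (by positivity : 0 < 2 * Real.pi)]

lemma ee_sub (x y : ℝ) : ‖ee x - ee y‖ ≤ 2 * Real.pi * |x - y| := by
  have : ee x - ee y = ee y * (ee (x - y) - 1) := by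
    rw [mul_sub, ← ee_add, mul_one]; congr 2; ring
  rw [this, norm_mul, ee_norm, one_mul]; exact ee_sub_one _

lemma S_succ (ω : ℝ) (m : ℕ) : S ω (m+1) - S ω m = ee (ω * (((m+1:ℕ):ℝ)^2 - ((m+1:ℕ):ℝ))) := by
  unfold S ee
  rw [Finset.sum_Icc_succ_top (by omega), add_sub_cancel_left]
  congr 1; push_cast; ring

lemma char_eq (q : ℕ) [NeZero q] (a c : ℤ) (j : ℕ) :
    (ZMod.stdAddChar ((a : ZMod q) * (j : ZMod q) ^ 2 + (c : ZMod q) * (j : ZMod q)) : ℂ) =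
    ee ((a * (j:ℝ) ^ 2 + c * j) / q) := by
  have : ((a : ZMod q) * (j : ZMod q) ^ 2 + (c : ZMod q) * (j : ZMod q)) =
    ((a * (j:ℤ)^2 + c * j : ℤ) : ZMod q) := by push_cast; ring
  rw [this, ZMod.stdAddChar_coe, ee]
  congr 1; push_cast; ring

/-- existence of good twist -/
lemma exists_twist (q : ℕ) [NeZero q] (a : ℤ) (ha : IsUnit (a : ZMod q)) :
    ∃ b : ℤ, 0 ≤ b ∧ b ≤ 1 ∧ ∀ m : ℕ,
      (q : ℝ) ≤ ‖∑ i ∈ Finset.range q,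
        ee ((a * ((m + i : ℕ) : ℝ) ^ 2 + (b - a) * ((m + i : ℕ) : ℝ)) / q)‖ ^ 2 := by
  have key : ∀ (b : ℤ) (m : ℕ), ∑ i ∈ Finset.range q,
        ee ((a * ((m + i : ℕ) : ℝ) ^ 2 + (b - a) * ((m + i : ℕ) : ℝ)) / q) =
        ∑ x : ZMod q, ZMod.stdAddChar ((a : ZMod q) * x ^ 2 + ((b - a : ℤ) : ZMod q) * x) := by
    intro b m
    rw [← window_sum q _ m]
    refine Finset.sum_congr rfl fun i _ => ?_
    rw [char_eq]; push_cast; rfl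
  have h := gauss_add q (a : ZMod q) ha
  by_contra! hc
  obtain ⟨m0, h0⟩ := hc 0 (by norm_num) (by norm_num)
  obtain ⟨m1, h1⟩ := hc 1 (by norm_num) (by norm_num)
  rw [key] at h0 h1
  simp only [Int.cast_sub, Int.cast_neg, Int.cast_one, zero_sub] at h0 h1
  linarith


lemma pointwise (n q : ℕ) (hq : 0 < q) (hqn : 2 * q < n) (a : ℤ) (ha : IsUnit (a : ZMod q))
    (ω : ℝ) (hω : |ω - a / q| ≤ 4 / (n * q)) :
    (q : ℝ) ^ 2 ≤ 10000 * ∑ m ∈ Finset.Icc 1 (n - 1), ‖S ω m‖ ^ 2 := by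
  have : NeZero q := ⟨hq.ne'⟩
  obtain ⟨b, hb0, hb1, hb⟩ := exists_twist q a ha
  set A := ∑ m ∈ Finset.Icc 1 (n - 1), ‖S ω m‖ ^ 2 with hA
  have hqR : (0:ℝ) < q := by exact_mod_cast hq
  have hnR : (0:ℝ) < n := by exact_mod_cast (by omega : 0 < n)
  have hb0' : (0:ℝ) ≤ b := by exact_mod_cast hb0
  have hb1' : (b:ℝ) ≤ 1 := by exact_mod_cast hb1
  have hA0 : 0 ≤ A := Finset.sum_nonneg fun _ _ => by positivity
  have hstep : ∀ m ∈ Finset.Icc 1 q,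
      (q:ℝ) ≤ 3 * (‖S ω (m + q)‖ ^ 2 + ‖S ω m‖ ^ 2 + 3240 / q * A) := by
    intro m hm
    rw [Finset.mem_Icc] at hm
    set u : ℕ → ℂ := fun i => ee (-(ω - a / q) * (((m + 1 + i : ℕ) : ℝ) ^ 2 - ((m + 1 + i : ℕ) : ℝ))
      + b * ((m + 1 + i : ℕ) : ℝ) / q) with hu
    have h1 := abel_bound (fun i => S ω (m + i)) u q (2 * Real.pi * (9 / q)) (fun i => ee_norm _) (by
      intro i hi
      refine (ee_sub _ _).trans (mul_le_mul_of_nonneg_left ?_ (by positivity))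
      have e : (-(ω - a / q) * (((m + 1 + (i+1) : ℕ) : ℝ) ^ 2 - ((m + 1 + (i+1) : ℕ) : ℝ))
          + b * ((m + 1 + (i+1) : ℕ) : ℝ) / q) -
          (-(ω - a / q) * (((m + 1 + i : ℕ) : ℝ) ^ 2 - ((m + 1 + i : ℕ) : ℝ))
          + b * ((m + 1 + i : ℕ) : ℝ) / q) = b / q - (ω - a / q) * (2 * ((m + 1 + i : ℕ) : ℝ)) := by
        push_cast; field_simp; ring
      rw [e]
      refine (abs_sub _ _).trans ?_
      rw [abs_mul, abs_of_nonneg (by positivity : (0:ℝ) ≤ b / q),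
        abs_of_nonneg (by positivity : (0:ℝ) ≤ 2 * ((m + 1 + i : ℕ) : ℝ))]
      have hj : ((m + 1 + i : ℕ) : ℝ) ≤ n := by exact_mod_cast (by omega : m + 1 + i ≤ n)
      have : |ω - a / q| * (2 * ((m + 1 + i : ℕ) : ℝ)) ≤ 4 / (n * q) * (2 * n) := by
        gcongr
      have e2 : 4 / ((n:ℝ) * q) * (2 * n) = 8 / q := by field_simp; norm_num
      have e3 : (b:ℝ) / q ≤ 1 / q := by gcongr
      have e4 : (9:ℝ) / q = 1 / q + 8 / q := by ring
      rw [e4]; linarith)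
    have h2 : ∑ i ∈ Finset.range q, u i * (S ω (m + (i + 1)) - S ω (m + i)) =
        ∑ i ∈ Finset.range q,
          ee ((a * ((m + 1 + i : ℕ) : ℝ) ^ 2 + (b - a) * ((m + 1 + i : ℕ) : ℝ)) / q) := by
      refine Finset.sum_congr rfl fun i _ => ?_
      rw [← add_assoc, S_succ, hu]
      simp only
      rw [← ee_add]
      congr 1
      push_cast
      field_simp
      ring
    rw [h2] at h1
    have h3 := hb (m + 1)
    have h4 : (∑ i ∈ Finset.range q, ‖S ω (m + (i + 1))‖) ^ 2 ≤ q * A := by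
      refine sq_sum_le_card_mul_sum_sq.trans ?_
      rw [Finset.card_range]
      refine mul_le_mul_of_nonneg_left ?_ hqR.le
      rw [← Finset.sum_image (s := Finset.range q) (g := fun i => m + (i + 1))
        (f := fun k => ‖S ω k‖ ^ 2) (by intro x _ y _ h; simp at h; omega)]
      refine Finset.sum_le_sum_of_subset_of_nonneg ?_ (fun _ _ _ => by positivity)
      intro k hk
      simp only [Finset.mem_image, Finset.mem_range] at hk
      obtain ⟨i, hi, rfl⟩ := hk
      rw [Finset.mem_Icc]; omega
    set G := ‖∑ i ∈ Finset.range q,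
          ee ((a * ((m + 1 + i : ℕ) : ℝ) ^ 2 + (b - a) * ((m + 1 + i : ℕ) : ℝ)) / q)‖ with hG
    set Sg := ∑ i ∈ Finset.range q, ‖S ω (m + (i + 1))‖ with hSg
    set x := ‖S ω (m + q)‖
    have hy : ‖S ω (m + 0)‖ = ‖S ω m‖ := rfl
    rw [hy] at h1
    set y := ‖S ω m‖
    set z := 2 * Real.pi * (9 / q) * Sg with hz
    have h5 : z ^ 2 ≤ 3240 / q * A := by
      have : z ^ 2 = (324 * Real.pi ^ 2 / q ^ 2) * Sg ^ 2 := by rw [hz]; ring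
      rw [this]
      have hpi : Real.pi ^ 2 ≤ 10 := by
        have := Real.pi_lt_d2; have := Real.pi_pos; nlinarith
      calc (324 * Real.pi ^ 2 / q ^ 2) * Sg ^ 2 ≤ (324 * 10 / q ^ 2) * (q * A) := by gcongr
        _ = 3240 / q * A := by field_simp; ring
    have h6 : G ^ 2 ≤ (x + y + z) ^ 2 := by
      have : 0 ≤ G := norm_nonneg _
      gcongr
    nlinarith [sq_nonneg (x - y), sq_nonneg (y - z), sq_nonneg (x - z)]
  have hsum := Finset.sum_le_sum hstep
  rw [← Finset.mul_sum, Finset.sum_add_distrib, Finset.sum_add_distrib] at hsum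
  simp only [Finset.sum_const, Nat.card_Icc, nsmul_eq_mul, Nat.add_sub_cancel] at hsum
  have hs1 : ∑ m ∈ Finset.Icc 1 q, ‖S ω m‖ ^ 2 ≤ A := by
    refine Finset.sum_le_sum_of_subset_of_nonneg ?_ (fun _ _ _ => by positivity)
    intro k; simp only [Finset.mem_Icc]; omega
  have hs2 : ∑ m ∈ Finset.Icc 1 q, ‖S ω (m + q)‖ ^ 2 ≤ A := by
    rw [← Finset.sum_image (s := Finset.Icc 1 q) (g := fun i => i + q)
        (f := fun k => ‖S ω k‖ ^ 2) (by intro x _ y _ h; simpa using h)]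
    refine Finset.sum_le_sum_of_subset_of_nonneg ?_ (fun _ _ _ => by positivity)
    intro k hk
    simp only [Finset.mem_image, Finset.mem_Icc] at hk ⊢
    obtain ⟨i, hi, rfl⟩ := hk
    omega
  have e : (q:ℝ) * (3240 / q * A) = 3240 * A := by field_simp
  rw [e] at hsum
  nlinarith

noncomputable def good (n : ℕ) : Set ℝ := Set.Icc 0 1 ∩
  {ω | 1 / 100000000 * (n : ℝ) ^ 2 ≤ ∑ m ∈ Finset.Icc 1 (n - 1), ‖S ω m‖ ^ 2}

lemma good_meas (n : ℕ) : MeasurableSet (good n) := by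
  refine measurableSet_Icc.inter (measurableSet_le measurable_const ?_)
  refine (continuous_finsetSum _ fun m _ => ?_).measurable
  unfold S
  fun_prop

lemma good_cover (n : ℕ) (hn : 4 ≤ n) : Set.Icc (0:ℝ) 1 ⊆ good n ∪
    ⋃ q ∈ Finset.Icc 1 (n / 4 / 8), ⋃ a ∈ Finset.range (q + 1),
      Metric.closedBall ((a : ℝ) / (q : ℝ)) (1 / (((n / 4 : ℕ) + 1) * (q : ℝ))) := by
  intro ω hω
  have hN : 0 < n / 4 := by omega
  obtain ⟨r, hr, hden⟩ := Real.exists_rat_abs_sub_le_and_den_le ω hN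
  set N := n / 4 with hNdef
  have hq : 0 < r.den := r.pos
  have hqR : (0:ℝ) < r.den := by exact_mod_cast hq
  have hNR : (0:ℝ) < N := by exact_mod_cast hN
  have hrr : (r : ℝ) = (r.num : ℝ) / (r.den : ℝ) := by
    exact_mod_cast (Rat.num_div_den r).symm
  rw [hrr] at hr
  by_cases h8 : r.den ≤ N / 8
  · right
    have hr' := hr
    rw [abs_le, ] at hr
    have hlt : (1:ℝ) / ((N + 1) * r.den) < 1 / r.den := by
      apply one_div_lt_one_div_of_lt hqR; nlinarith
    have hnum0 : 0 ≤ r.num := by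
      have : (-1 : ℝ) < r.num := by
        have : (r.num : ℝ) / r.den > -(1 / r.den) := by linarith [hω.1, hr.2]
        rw [gt_iff_lt, ← neg_div, div_lt_div_iff_of_pos_right hqR] at this
        exact this
      have : (-1 : ℤ) < r.num := by exact_mod_cast this
      omega
    have hnum1 : r.num ≤ r.den := by
      have : (r.num : ℝ) < r.den + 1 := by
        have : (r.num : ℝ) / r.den < (r.den + 1) / r.den := by
          rw [add_div, div_self hqR.ne']; linarith [hω.2, hr.1]
        rwa [div_lt_div_iff_of_pos_right hqR] at this
      have : r.num < (r.den : ℤ) + 1 := by exact_mod_cast this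
      omega
    simp only [Set.mem_iUnion]
    refine ⟨r.den, Finset.mem_Icc.2 ⟨hq, h8⟩, r.num.toNat, Finset.mem_range.2 (by omega), ?_⟩
    rw [Metric.mem_closedBall, Real.dist_eq]
    have : ((r.num.toNat : ℕ) : ℝ) = (r.num : ℝ) := by exact_mod_cast Int.toNat_of_nonneg hnum0
    rw [this]; exact hr'
  · left
    refine ⟨hω, ?_⟩
    have hcop : IsUnit (r.num : ZMod r.den) := by
      have h := (ZMod.isUnit_iff_coprime r.num.natAbs r.den).2 r.reduced
      rcases Int.natAbs_eq r.num with h1 | h1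
      · rw [h1, Int.cast_natCast]; exact h
      · rw [h1, Int.cast_neg, Int.cast_natCast]; exact h.neg
    have hnN : (n:ℝ) ≤ 4 * (N + 1) := by exact_mod_cast (by omega : n ≤ 4 * (N + 1))
    have hnR : (0:ℝ) < n := by exact_mod_cast (by omega : 0 < n)
    have := pointwise n r.den hq (by omega) r.num hcop ω (hr.trans (by
      rw [div_le_div_iff₀ (by positivity) (by positivity)]
      nlinarith))
    have h32 : (n:ℝ) ≤ 32 * r.den := by exact_mod_cast (by omega : n ≤ 32 * r.den)
    simp only [Set.mem_ofPred_eq]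
    have : (n:ℝ)^2 ≤ (32 * r.den)^2 := by gcongr
    nlinarith

lemma good_vol (n : ℕ) (hn : 4 ≤ n) : ENNReal.ofReal (1/2) ≤ volume (good n) := by
  set N := n / 4 with hN
  have hb : volume (⋃ q ∈ Finset.Icc 1 (N / 8), ⋃ a ∈ Finset.range (q + 1),
      Metric.closedBall ((a : ℝ) / (q : ℝ)) (1 / (((N : ℕ) + 1) * (q : ℝ)))) ≤ ENNReal.ofReal (1/2) := by
    calc _ ≤ ∑ q ∈ Finset.Icc 1 (N / 8), volume (⋃ a ∈ Finset.range (q + 1),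
      Metric.closedBall ((a : ℝ) / (q : ℝ)) (1 / (((N : ℕ) + 1) * (q : ℝ)))) :=
          measure_biUnion_finset_le _ _
      _ ≤ ∑ q ∈ Finset.Icc 1 (N / 8), ENNReal.ofReal (4 / (N + 1)) := by
        refine Finset.sum_le_sum fun q hq => ?_
        have hq1 : 1 ≤ q := (Finset.mem_Icc.1 hq).1
        have hqR : (1:ℝ) ≤ q := by exact_mod_cast hq1
        refine (measure_biUnion_finset_le _ _).trans ?_
        simp only [Real.volume_closedBall, Finset.sum_const, Finset.card_range, nsmul_eq_mul]
        rw [← ENNReal.ofReal_natCast, ← ENNReal.ofReal_mul (by positivity)]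
        apply ENNReal.ofReal_le_ofReal
        push_cast
        have : ((q:ℝ) + 1) * (2 * (1 / ((N + 1) * q))) = (2 * (q + 1)) / ((N + 1) * q) := by ring
        rw [this, div_le_div_iff₀ (by positivity) (by positivity)]
        have : (0:ℝ) ≤ N := by positivity
        nlinarith
      _ ≤ ENNReal.ofReal (1/2) := by
        simp only [Finset.sum_const, Nat.card_Icc, nsmul_eq_mul, Nat.add_sub_cancel]
        rw [← ENNReal.ofReal_natCast, ← ENNReal.ofReal_mul (by positivity)]
        apply ENNReal.ofReal_le_ofReal
        have : ((N / 8 : ℕ) : ℝ) ≤ N / 8 := by exact_mod_cast Nat.cast_div_le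
        rw [mul_div_assoc', div_le_div_iff₀ (by positivity) (by positivity)]
        linarith
  have h1 : volume (Set.Icc (0:ℝ) 1) ≤ volume (good n) + ENNReal.ofReal (1/2) :=
    (measure_mono (good_cover n hn)).trans ((measure_union_le _ _).trans (add_le_add le_rfl hb))
  rw [Real.volume_Icc, show ((1:ℝ) - 0) = 1/2 + 1/2 by norm_num,
    ENNReal.ofReal_add (by norm_num) (by norm_num)] at h1
  exact (ENNReal.add_le_add_iff_right ENNReal.ofReal_ne_top).1 h1

/-- There are universal constants `δ, C₀ > 0` such that for every strictly increasing
sequence `(n_k)` of positive integers there is a set `Ω ⊆ [0,1]` of Lebesgue measure at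
least `δ` with: for every `ω ∈ Ω` there are infinitely many `k` with
`∑_{m=1}^{n_k - 1} |S_m(ω)|² ≥ C₀ n_k²`. -/
theorem stmt_8 :
    ∃ δ > (0 : ℝ), ∃ C₀ > (0 : ℝ),
      ∀ nseq : ℕ → ℕ, StrictMono nseq → (∀ k, 1 ≤ nseq k) →
        ∃ Ω : Set ℝ, Ω ⊆ Set.Icc 0 1 ∧ MeasurableSet Ω ∧
          ENNReal.ofReal δ ≤ volume Ω ∧
          ∀ ω ∈ Ω,
            {k : ℕ | C₀ * (nseq k : ℝ) ^ 2 ≤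
              ∑ m ∈ Finset.Icc 1 (nseq k - 1), ‖S ω m‖ ^ 2}.Infinite := by
  refine ⟨1/2, by norm_num, 1/100000000, by norm_num, fun nseq hmono _ => ?_⟩
  have hUsub : ∀ K, (⋃ k ≥ K, good (nseq k)) ⊆ Set.Icc (0:ℝ) 1 := fun K =>
    Set.iUnion₂_subset fun k _ => Set.inter_subset_left
  have hUmeas : ∀ K, MeasurableSet (⋃ k ≥ K, good (nseq k)) := fun K =>
    MeasurableSet.iUnion fun k => MeasurableSet.iUnion fun _ => good_meas _
  refine ⟨⋂ K, ⋃ k ≥ K, good (nseq k), (Set.iInter_subset _ 0).trans (hUsub 0),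
    MeasurableSet.iInter hUmeas, ?_, ?_⟩
  · have hanti : Antitone fun K : ℕ => ⋃ k ≥ K, good (nseq k) := by
      intro K L h
      exact Set.iUnion₂_subset fun k hk =>
        Set.subset_iUnion₂ (s := fun k (_ : k ≥ K) => good (nseq k)) k (le_trans h hk)
    have ht := tendsto_measure_iInter_atTop (μ := volume)
      (fun K => (hUmeas K).nullMeasurableSet) hanti
      ⟨0, ((measure_mono (hUsub 0)).trans_lt (by simp)).ne⟩
    refine ge_of_tendsto' ht fun K => ?_
    have h4 : 4 ≤ nseq (max K 4) := le_trans (le_max_right K 4) hmono.le_apply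
    exact (good_vol _ h4).trans (measure_mono
      (Set.subset_iUnion₂ (s := fun k (_ : k ≥ K) => good (nseq k)) (max K 4) (le_max_left _ _)))
  · intro ω hω
    rw [← Nat.frequently_atTop_iff_infinite, Filter.frequently_atTop]
    intro K
    have := Set.mem_iInter.1 hω K
    simp only [Set.mem_iUnion] at this
    obtain ⟨k, hk, hg⟩ := this
    exact ⟨k, hk, hg.2⟩
end

section
/- Let (ψ(q))_{q≥1} be a non-increasing sequence of positive real numbers such that ∑_{q=1}^{∞} ψ(q) diverges. Then for Lebesgue-almost every ω ∈ ℝ, there are infinitely many positive integers q for which there exists an even integer p with gcd(p, q) = 1 and |q·ω − p| < ψ(q). -/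
open MeasureTheory

lemma oddsum (M : ℕ) : ∑ q ∈ (Finset.range (M+1)).filter Odd, q = ((M+1)/2)^2 := by
  induction M with
  | zero => decide
  | succ n ih =>
    rw [Finset.range_add_one, Finset.filter_insert]
    split_ifs with h
    · rw [Finset.sum_insert (by simp), ih]
      obtain ⟨k, hk⟩ := h
      have h1 : n = 2 * k := by omega
      subst h1
      rw [show (2*k+1)/2 = k by omega, show (2*k+1+1)/2 = k+1 by omega]; ring
    · rw [ih]
      rw [Nat.not_odd_iff_even] at h
      obtain ⟨k, hk⟩ := h
      congr 1; omega

lemma invsq_sum (n : ℕ) : ∑ j ∈ Finset.range (n+1), (1:ℝ) / (2*(j:ℝ)+3)^2 ≤ 17/72 - 1/(4*((n:ℝ)+2)) := by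
  induction n with
  | zero => norm_num
  | succ n ih =>
    rw [Finset.sum_range_succ]
    have : 1 / ((2*((n+1 : ℕ):ℝ)+3 : ℝ))^2 ≤ 1/(4*((n:ℝ)+2)) - 1/(4*(((n+1:ℕ):ℝ)+2)) := by
      push_cast
      rw [div_sub_div _ _ (by positivity) (by positivity), div_le_div_iff₀ (by positivity) (by positivity)]
      nlinarith [(Nat.cast_nonneg n : (0:ℝ) ≤ n)]
    linarith

lemma phi_ge (Q q : ℕ) (hq : q ∈ (Finset.range (Q+1)).filter Odd) :
    q ≤ Nat.totient q + ∑ j ∈ (Finset.range (Q+1)).filter (fun j => (2*j+3) ∣ q), q / (2*j+3) := by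
  simp only [Finset.mem_filter, Finset.mem_range] at hq
  obtain ⟨hqQ, hodd⟩ := hq
  have hq0 : q ≠ 0 := by rintro rfl; simp at hodd
  have h1 := Nat.sum_totient q
  rw [← Nat.sum_div_divisors q Nat.totient] at h1
  have h2 : q.divisors = insert 1 (q.divisors.erase 1) := by
    rw [Finset.insert_erase]; simp [hq0]
  rw [h2, Finset.sum_insert (by simp)] at h1
  simp only [Nat.div_one] at h1
  have h3 : ∑ d ∈ q.divisors.erase 1, Nat.totient (q/d) ≤
      ∑ j ∈ (Finset.range (Q+1)).filter (fun j => (2*j+3) ∣ q), q / (2*j+3) := by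
    calc _ ≤ ∑ d ∈ q.divisors.erase 1, (q/d) := Finset.sum_le_sum fun d _ => Nat.totient_le _
      _ ≤ ∑ d ∈ ((Finset.range (Q+1)).filter (fun j => (2*j+3) ∣ q)).image (fun j => 2*j+3), q/d := by
        apply Finset.sum_le_sum_of_subset
        intro d hd
        simp only [Finset.mem_erase, Nat.mem_divisors] at hd
        obtain ⟨hd1, hdq, -⟩ := hd
        have hdo : Odd d := Odd.of_dvd_nat hodd hdq
        obtain ⟨k, hk⟩ := hdo
        have := Nat.le_of_dvd (by omega) hdq
        simp only [Finset.mem_image, Finset.mem_filter, Finset.mem_range]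
        refine ⟨k-1, ⟨by omega, ?_⟩, by omega⟩
        rwa [show 2*(k-1)+3 = d by omega]
      _ = _ := by
        rw [Finset.sum_image]
        intro a _ b _ h
        simp only at h
        omega
  omega

lemma inner_le (Q d : ℕ) (hd : 0 < d) :
   ((∑ q ∈ ((Finset.range (Q+1)).filter Odd).filter (fun q => d ∣ q), q / d : ℕ) : ℝ) ≤ (Q:ℝ)^2 * (1 / (d:ℝ)^2) := by
  have h : ∑ q ∈ ((Finset.range (Q+1)).filter Odd).filter (fun q => d ∣ q), q / d ≤ ∑ m ∈ (Finset.range (Q/d+1)).filter Odd, m := by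
    calc _ = ∑ m ∈ (((Finset.range (Q+1)).filter Odd).filter (fun q => d ∣ q)).image (fun q => q / d), m := by
          rw [Finset.sum_image]
          intro a ha b hb hab
          simp only [Finset.coe_filter, Finset.mem_filter, Set.mem_ofPred_eq] at ha hb
          exact (Nat.div_left_inj ha.2 hb.2).1 hab
      _ ≤ _ := by
        apply Finset.sum_le_sum_of_subset
        intro m hm
        simp only [Finset.mem_image, Finset.mem_filter, Finset.mem_range] at hm ⊢
        obtain ⟨q, ⟨⟨h1, h2⟩, h3⟩, rfl⟩ := hm
        refine ⟨?_, Odd.of_dvd_nat h2 (Nat.div_dvd_of_dvd h3)⟩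
        have := Nat.div_le_div_right (c := d) (show q ≤ Q by omega)
        omega
  rw [oddsum] at h
  have h2 : ((Q/d+1)/2)^2 ≤ (Q/d)^2 := by
    apply Nat.pow_le_pow_left
    generalize Q/d = M
    omega
  have h3 := h.trans h2
  have h4 : ((∑ q ∈ ((Finset.range (Q+1)).filter Odd).filter (fun q => d ∣ q), q / d : ℕ) : ℝ) ≤ ((Q/d : ℕ):ℝ)^2 := by exact_mod_cast h3
  refine h4.trans ?_
  have h5 : ((Q/d : ℕ):ℝ) ≤ (Q:ℝ)/d := Nat.cast_div_le
  calc _ ≤ ((Q:ℝ)/d)^2 := by gcongr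
    _ = _ := by ring

lemma phi_sum (Q : ℕ) : (1/72:ℝ) * (Q:ℝ)^2 ≤ ((∑ q ∈ (Finset.range (Q+1)).filter Odd, Nat.totient q : ℕ) : ℝ) := by
  have h1 := Finset.sum_le_sum (phi_ge Q)
  rw [Finset.sum_add_distrib, oddsum] at h1
  have h2 : ∑ q ∈ (Finset.range (Q+1)).filter Odd, ∑ j ∈ (Finset.range (Q+1)).filter (fun j => (2*j+3) ∣ q), q / (2*j+3)
     = ∑ j ∈ Finset.range (Q+1), ∑ q ∈ ((Finset.range (Q+1)).filter Odd).filter (fun q => (2*j+3) ∣ q), q / (2*j+3) := by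
    apply Finset.sum_comm'
    intro x y
    simp only [Finset.mem_filter]
    tauto
  rw [h2] at h1
  have h3 : ((∑ j ∈ Finset.range (Q+1), ∑ q ∈ ((Finset.range (Q+1)).filter Odd).filter (fun q => (2*j+3) ∣ q), q / (2*j+3) : ℕ) : ℝ)
      ≤ (Q:ℝ)^2 * (17/72) := by
    rw [Nat.cast_sum]
    calc _ ≤ ∑ j ∈ Finset.range (Q+1), (Q:ℝ)^2 * (1 / (2*j+3:ℝ)^2) := by
          apply Finset.sum_le_sum
          intro j _
          have := inner_le Q (2*j+3) (by omega)
          push_cast at this ⊢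
          exact this
      _ = (Q:ℝ)^2 * ∑ j ∈ Finset.range (Q+1), (1 / (2*j+3:ℝ)^2) := by rw [Finset.mul_sum]
      _ ≤ _ := by
        gcongr
        refine (invsq_sum Q).trans ?_
        have : (0:ℝ) ≤ 1/(4*(Q+2)) := by positivity
        linarith
  have h4 : (Q:ℝ)^2/4 ≤ ((((Q+1)/2)^2 : ℕ):ℝ) := by
    have : (Q:ℝ) ≤ 2 * (((Q+1)/2 : ℕ):ℝ) := by
      have : Q ≤ 2 * ((Q+1)/2) := by omega
      exact_mod_cast this
    push_cast at this ⊢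
    nlinarith [(Nat.cast_nonneg Q : (0:ℝ) ≤ Q)]
  have h5 : ((((Q+1)/2)^2 : ℕ):ℝ) ≤ _ := Nat.cast_le.2 h1
  rw [Nat.cast_add] at h5
  linarith

/-- reduced fractions in [0,1) with odd denominator at most Q -/
def FF (Q : ℕ) : Finset ℚ :=
  ((Finset.range (Q+1)).filter Odd).biUnion
    (fun q => ((Finset.range q).filter (Nat.Coprime q)).image (fun a : ℕ => (a:ℚ)/q))

lemma den_aux {q a : ℕ} (hq : 0 < q) (h : Nat.Coprime q a) : ((a:ℚ)/q).den = q ∧ ((a:ℚ)/q).num = a := by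
  have h2 : Nat.Coprime (a:ℤ).natAbs (q:ℤ).natAbs := by simpa using h.symm
  constructor
  · have := Rat.den_div_eq_of_coprime (a := a) (b := q) (by exact_mod_cast hq) h2
    rw [Int.cast_natCast, Int.cast_natCast] at this
    exact Int.ofNat_inj.1 this
  · have := Rat.num_div_eq_of_coprime (a := a) (b := q) (by exact_mod_cast hq) h2
    rwa [Int.cast_natCast, Int.cast_natCast] at this

lemma FF_mem (Q : ℕ) (f : ℚ) : f ∈ FF Q ↔ 0 ≤ f ∧ f < 1 ∧ Odd f.den ∧ f.den ≤ Q := by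
  simp only [FF, Finset.mem_biUnion, Finset.mem_filter, Finset.mem_range, Finset.mem_image]
  constructor
  · rintro ⟨q, ⟨h1, h2⟩, a, ⟨h3, h4⟩, rfl⟩
    have hq : 0 < q := by omega
    have hd := den_aux hq h4
    rw [hd.1]
    refine ⟨by positivity, ?_, h2, by omega⟩
    rw [div_lt_one (by exact_mod_cast hq)]
    exact_mod_cast h3
  · rintro ⟨h0, h1, h2, h3⟩
    have hn : 0 ≤ f.num := Rat.num_nonneg.2 h0
    have hc : ((f.num.natAbs : ℕ) : ℤ) = f.num := Int.natAbs_of_nonneg hn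
    have hc' : ((f.num.natAbs : ℕ) : ℚ) = f.num := by
      rw [← Int.cast_natCast, hc]
    have he : ((f.num.natAbs : ℕ) : ℚ) / f.den = f := by rw [hc']; exact Rat.num_div_den f
    refine ⟨f.den, ⟨by omega, h2⟩, f.num.natAbs, ⟨?_, f.reduced.symm⟩, he⟩
    rw [← he, div_lt_one (by exact_mod_cast f.den_pos)] at h1
    exact_mod_cast h1

lemma FF_card (Q : ℕ) : (FF Q).card = ∑ q ∈ (Finset.range (Q+1)).filter Odd, Nat.totient q := by
  rw [FF, Finset.card_biUnion]
  · apply Finset.sum_congr rfl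
    intro q hq
    simp only [Finset.mem_filter] at hq
    have hq0 : 0 < q := hq.2.pos
    rw [Finset.card_image_of_injOn]
    · rfl
    · intro a ha b hb hab
      simp only at hab
      field_simp at hab
      exact_mod_cast hab
  · intro q hq s hs hqs
    rw [Function.onFun, Finset.disjoint_left]
    intro f hf hf'
    rw [Finset.mem_coe, Finset.mem_filter] at hq hs
    simp only [Finset.mem_filter, Finset.mem_range, Finset.mem_image] at hf hf'
    obtain ⟨a, ⟨h1, h2⟩, rfl⟩ := hf
    obtain ⟨b, ⟨h3, h4⟩, h5⟩ := hf'
    apply hqs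
    rw [← (den_aux hq.2.pos h2).1, ← h5, (den_aux hs.2.pos h4).1]

lemma FF_card_le (Q : ℕ) : ((FF Q).card : ℝ) ≤ (Q:ℝ)^2 := by
  have : (FF Q).card ≤ Q^2 := by
    rw [FF_card]
    calc _ ≤ ∑ q ∈ (Finset.range (Q+1)).filter Odd, q := Finset.sum_le_sum fun q _ => Nat.totient_le q
      _ = ((Q+1)/2)^2 := oddsum Q
      _ ≤ Q^2 := Nat.pow_le_pow_left (by omega) _
  exact_mod_cast this

lemma FF_card_ge (Q : ℕ) : (1/72:ℝ) * (Q:ℝ)^2 ≤ ((FF Q).card : ℝ) := by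
  rw [FF_card]; exact phi_sum Q

lemma FF_sep (Q : ℕ) (f g : ℚ) (hf : f ∈ FF Q) (hg : g ∈ FF Q) (h : f ≠ g) :
    1/(Q:ℝ)^2 ≤ |(f:ℝ) - g| := by
  rw [FF_mem] at hf hg
  have hfd : (0:ℝ) < f.den := by exact_mod_cast f.den_pos
  have hgd : (0:ℝ) < g.den := by exact_mod_cast g.den_pos
  have hfQ : (f.den:ℝ) ≤ Q := by exact_mod_cast hf.2.2.2
  have hgQ : (g.den:ℝ) ≤ Q := by exact_mod_cast hg.2.2.2
  have e : (f:ℝ) - g = ((f.num * g.den - g.num * f.den : ℤ):ℝ) / (f.den * g.den) := by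
    rw [Rat.cast_def, Rat.cast_def]
    push_cast
    field_simp
  have hne : (f.num * g.den - g.num * f.den : ℤ) ≠ 0 := by
    intro h0
    rw [h0] at e
    apply h
    have : (f:ℝ) = g := by simp at e; linarith
    exact_mod_cast this
  have h1 : (1:ℝ) ≤ |((f.num * g.den - g.num * f.den : ℤ):ℝ)| := by
    exact_mod_cast Int.one_le_abs hne
  rw [e, abs_div, abs_of_pos (mul_pos hfd hgd)]
  gcongr
  nlinarith

lemma sep_count (T : Finset ℚ) (s : ℝ) (hs : 0 < s) (hT : ∀ f ∈ T, ∀ g ∈ T, f ≠ g → s ≤ |(f:ℝ) - g|)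
    (x ρ : ℝ) (hρ : 0 ≤ ρ) : ((T.filter (fun f : ℚ => |x - (f:ℝ)| < ρ)).card : ℝ) ≤ 2*ρ/s + 1 := by
  have : (T.filter (fun f : ℚ => |x - (f:ℝ)| < ρ)).card ≤ (Finset.range (⌊2*ρ/s⌋₊+1)).card := by
    apply Finset.card_le_card_of_injOn (fun f : ℚ => ⌊((f:ℝ) - x + ρ)/s⌋₊)
    · intro f hf
      simp only [Finset.coe_filter, Set.mem_ofPred_eq] at hf
      have := abs_lt.1 hf.2
      simp only [Finset.coe_range, Set.mem_Iio]
      apply Nat.lt_succ_of_le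
      apply Nat.floor_le_floor
      gcongr
      linarith
    · intro f hf g hg hfg
      simp only [Finset.coe_filter, Set.mem_ofPred_eq] at hf hg hfg
      by_contra hne
      have h := hT f hf.1 g hg.1 hne
      have hf1 := abs_lt.1 hf.2
      have hg1 := abs_lt.1 hg.2
      have p1 := Nat.floor_le (show 0 ≤ ((f:ℝ) - x + ρ)/s from div_nonneg (by linarith) hs.le)
      have p2 := Nat.lt_floor_add_one (((f:ℝ) - x + ρ)/s)
      have p3 := Nat.floor_le (show 0 ≤ ((g:ℝ) - x + ρ)/s from div_nonneg (by linarith) hs.le)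
      have p4 := Nat.lt_floor_add_one (((g:ℝ) - x + ρ)/s)
      rw [hfg] at p1 p2
      have q : |((f:ℝ) - x + ρ)/s - ((g:ℝ) - x + ρ)/s| < 1 := by
        rw [abs_lt]; constructor <;> linarith
      rw [← sub_div, abs_div, abs_of_pos hs, div_lt_one hs] at q
      have : (f:ℝ) - x + ρ - ((g:ℝ) - x + ρ) = f - g := by ring
      rw [this] at q
      linarith
  rw [Finset.card_range] at this
  have h2 : ((T.filter (fun f : ℚ => |x - (f:ℝ)| < ρ)).card : ℝ) ≤ (⌊2*ρ/s⌋₊:ℝ)+1 := by exact_mod_cast this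
  have := Nat.floor_le (show 0 ≤ 2*ρ/s by positivity)
  linarith

lemma second_moment {ι : Type*} (I : Finset ι) (B : ι → Set ℝ) (U : Set ℝ)
    (hB : ∀ i ∈ I, MeasurableSet (B i)) (hU : MeasurableSet U) (hUf : volume U ≠ ⊤)
    (hBU : ∀ i ∈ I, B i ⊆ U) (C : ℝ) (hC : 0 < C)
    (hS : 0 < ∑ i ∈ I, volume.real (B i))
    (h : ∑ i ∈ I, ∑ j ∈ I, volume.real (B i ∩ B j) ≤ C * (∑ i ∈ I, volume.real (B i))^2) :
    1 / C ≤ volume.real U := by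
  set S := ∑ i ∈ I, volume.real (B i) with hSdef
  have hBf : ∀ i ∈ I, volume (B i) ≠ ⊤ := fun i hi => measure_ne_top_of_subset (hBU i hi) hUf
  have int1 : ∀ V : Set ℝ, MeasurableSet V → volume V ≠ ⊤ → Integrable (V.indicator (1 : ℝ → ℝ)) volume :=
    fun V hV hVf => (integrable_indicator_iff hV).2 (integrableOn_const hVf)
  set t : ℝ := 1 / (C * S)
  have key : 0 ≤ ∫ x, (t * ∑ i ∈ I, (B i).indicator (1 : ℝ → ℝ) x - U.indicator 1 x)^2 :=
    integral_nonneg fun x => sq_nonneg _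
  have e : ∀ x, (t * ∑ i ∈ I, (B i).indicator (1 : ℝ → ℝ) x - U.indicator 1 x)^2 =
      (t^2 * ∑ i ∈ I, ∑ j ∈ I, (B i ∩ B j).indicator (1 : ℝ → ℝ) x
        - 2 * t * ∑ i ∈ I, (B i).indicator (1 : ℝ → ℝ) x) + U.indicator 1 x := by
    intro x
    have e1 : ∑ i ∈ I, ∑ j ∈ I, (B i ∩ B j).indicator (1 : ℝ → ℝ) x =
        (∑ i ∈ I, (B i).indicator (1 : ℝ → ℝ) x)^2 := by
      rw [sq, Finset.sum_mul_sum]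
      simp_rw [Set.inter_indicator_one, Pi.mul_apply]
    have e2 : (∑ i ∈ I, (B i).indicator (1 : ℝ → ℝ) x) * U.indicator 1 x = ∑ i ∈ I, (B i).indicator (1 : ℝ → ℝ) x := by
      rw [Finset.sum_mul]
      apply Finset.sum_congr rfl
      intro i hi
      rw [← Pi.mul_apply, ← Set.inter_indicator_one, Set.inter_eq_left.2 (hBU i hi)]
    have e3 : (U.indicator (1 : ℝ → ℝ) x)^2 = U.indicator 1 x := by
      by_cases hx : x ∈ U <;> simp [hx]
    rw [e1, sub_sq, e3]
    have : 2 * (t * ∑ i ∈ I, (B i).indicator (1 : ℝ → ℝ) x) * U.indicator 1 x = 2 * t * ((∑ i ∈ I, (B i).indicator (1 : ℝ → ℝ) x) * U.indicator 1 x) := by ring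
    rw [this, e2]; ring
  simp_rw [e] at key
  have i1 : ∀ i ∈ I, ∀ j ∈ I, Integrable ((B i ∩ B j).indicator (1 : ℝ → ℝ)) volume := fun i hi j hj =>
    int1 _ ((hB i hi).inter (hB j hj)) (measure_ne_top_of_subset Set.inter_subset_left (hBf i hi))
  have i2 : ∀ i ∈ I, Integrable ((B i).indicator (1 : ℝ → ℝ)) volume := fun i hi =>
    int1 _ (hB i hi) (hBf i hi)
  have i3 := int1 U hU hUf
  have j1 : Integrable (fun x => t^2 * ∑ i ∈ I, ∑ j ∈ I, (B i ∩ B j).indicator (1 : ℝ → ℝ) x) volume :=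
    (integrable_finsetSum _ fun i hi => integrable_finsetSum _ fun j hj => i1 i hi j hj).const_mul _
  have j2 : Integrable (fun x => 2 * t * ∑ i ∈ I, (B i).indicator (1 : ℝ → ℝ) x) volume :=
    (integrable_finsetSum _ fun i hi => i2 i hi).const_mul _
  rw [integral_add (f := fun x => t^2 * ∑ i ∈ I, ∑ j ∈ I, (B i ∩ B j).indicator (1 : ℝ → ℝ) x
        - 2 * t * ∑ i ∈ I, (B i).indicator (1 : ℝ → ℝ) x) (j1.sub j2) i3, integral_sub j1 j2, integral_const_mul, integral_const_mul,
    integral_finsetSum _ (fun i hi => integrable_finsetSum _ fun j hj => i1 i hi j hj),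
    integral_finsetSum _ i2, integral_indicator_one hU,
    Finset.sum_congr rfl (fun i hi => integral_finsetSum _ fun j hj => i1 i hi j hj),
    Finset.sum_congr rfl (fun i hi => Finset.sum_congr rfl fun j hj => integral_indicator_one ((hB i hi).inter (hB j hj))),
    Finset.sum_congr rfl (fun i hi => integral_indicator_one (hB i hi)), ← hSdef] at key
  have h2 : t^2 * ∑ i ∈ I, ∑ j ∈ I, volume.real (B i ∩ B j) ≤ t^2 * (C * S^2) := by gcongr
  have h3 : t^2 * (C * S^2) = 1/C := by simp only [t]; field_simp
  have h4 : 2 * t * S = 2 * (1/C) := by simp only [t]; field_simp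
  linarith

lemma diverge (ψ : ℕ → ℝ)
    (hpos : ∀ q, 1 ≤ q → 0 < ψ q)
    (hmono : ∀ q₁ q₂, 1 ≤ q₁ → q₁ ≤ q₂ → ψ q₂ ≤ ψ q₁)
    (hdiv : Filter.Tendsto (fun N => ∑ q ∈ Finset.Icc 1 N, ψ q)
      Filter.atTop Filter.atTop) :
    ¬ Summable (fun k : ℕ => min ((2:ℝ)^k * ψ (2^k)) 1) := by
  intro hs
  have h0 := hs.tendsto_atTop_zero
  have h1 : Summable (fun k : ℕ => (2:ℝ)^k * ψ (2^k)) := by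
    apply (summable_congr_atTop _).1 hs
    filter_upwards [h0.eventually (gt_mem_nhds one_pos)] with k hk
    rcases min_lt_iff.1 hk with h | h
    · exact min_eq_left h.le
    · exact absurd h (lt_irrefl _)
  let f : ℕ → ℝ := fun n => if n = 0 then 0 else ψ n
  have h2 : Summable (fun k : ℕ => (2:ℝ)^k * f (2^k)) := by simpa [f] using h1
  rw [summable_condensed_iff_of_nonneg] at h2
  · have h3 := h2.hasSum.tendsto_sum_nat
    have h4 := h3.comp (Filter.tendsto_add_atTop_nat 1)
    have h5 : ((fun n => ∑ i ∈ Finset.range n, f i) ∘ fun a => a + 1) = (fun N => ∑ q ∈ Finset.Icc 1 N, ψ q) := by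
      funext N
      simp only [Function.comp]
      rw [Finset.range_eq_Ico, Finset.sum_eq_sum_Ico_succ_bot (by omega)]
      simp only [f, if_true, zero_add]
      apply Finset.sum_congr
      · ext; simp
      · intro x hx
        simp at hx
        rw [if_neg (by omega)]
    rw [h5] at h4
    exact not_tendsto_nhds_of_tendsto_atTop hdiv _ h4
  · intro n
    simp only [f]; split_ifs with h
    · exact le_rfl
    · exact (hpos n (by omega)).le
  · intro m n hm hmn
    simp only [f]
    rw [if_neg (by omega), if_neg (by omega)]
    exact hmono m n hm hmn

lemma pair_bound (r : ℕ → ℝ) (hr0 : ∀ k, 0 < r k) (hra : Antitone r) (k l : ℕ) (hkl : k ≤ l) :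
    ∑ f ∈ FF (2^k), ∑ g ∈ FF (2^l), volume.real (Metric.ball (f:ℝ) (r k) ∩ Metric.ball (g:ℝ) (r l)) ≤
      144 * (2 * r k * (FF (2^k)).card) * (2 * r l * (FF (2^l)).card)
        + 72 * (2 * r l * (FF (2^l)).card) * ((4:ℝ)^k/4^l) := by
  have hl0 := hr0 l
  have hk0 := hr0 k
  have hlk := hra hkl
  have e4 : ∀ k : ℕ, (((2^k : ℕ):ℝ))^2 = 4^k := by
    intro k; push_cast; rw [← pow_mul, mul_comm, pow_mul]; norm_num
  have inner : ∀ f ∈ FF (2^k), ∑ g ∈ FF (2^l), volume.real (Metric.ball (f:ℝ) (r k) ∩ Metric.ball (g:ℝ) (r l)) ≤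
      (4 * r k * 4^l + 1) * (2 * r l) := by
    intro f hf
    calc _ ≤ ∑ g ∈ FF (2^l), (if |(f:ℝ) - g| < r k + r l then 2 * r l else 0) := by
          apply Finset.sum_le_sum
          intro g hg
          split_ifs with h
          · calc _ ≤ volume.real (Metric.ball (g:ℝ) (r l)) :=
                  measureReal_mono Set.inter_subset_right measure_ball_lt_top.ne
              _ = _ := by rw [Real.volume_real_ball hl0.le]
          · have : Metric.ball (f:ℝ) (r k) ∩ Metric.ball (g:ℝ) (r l) = ∅ := by
              rw [← Set.disjoint_iff_inter_eq_empty]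
              apply Metric.ball_disjoint_ball
              rw [Real.dist_eq]; linarith
            rw [this]; simp
      _ = ((FF (2^l)).filter (fun g : ℚ => |(f:ℝ) - g| < r k + r l)).card * (2 * r l) := by
          rw [← Finset.sum_filter, Finset.sum_const, nsmul_eq_mul]
      _ ≤ _ := by
          gcongr
          have := sep_count (FF (2^l)) (1/(((2^l:ℕ):ℝ))^2) (by positivity) (fun a ha b hb => FF_sep (2^l) a b ha hb) f (r k + r l) (by linarith)
          refine this.trans ?_
          rw [e4, div_div_eq_mul_div, div_one]
          have : (0:ℝ) < 4^l := by positivity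
          nlinarith
  have h1 := Finset.sum_le_sum inner
  rw [Finset.sum_const, nsmul_eq_mul] at h1
  refine h1.trans ?_
  have c1 := FF_card_ge (2^l)
  have c2 := FF_card_le (2^k)
  rw [e4] at c1 c2
  have p : (0:ℝ) < 4^l := by positivity
  have s1 : (FF (2^k)).card * (4 * r k * 4^l * (2 * r l)) ≤ 144 * (2 * r k * (FF (2^k)).card) * (2 * r l * (FF (2^l)).card) := by
    have : (4:ℝ)^l ≤ 72 * (FF (2^l)).card := by linarith
    calc _ = (FF (2^k)).card * (8 * r k * r l) * (4:ℝ)^l := by ring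
      _ ≤ (FF (2^k)).card * (8 * r k * r l) * (72 * (FF (2^l)).card) := by gcongr
      _ = _ := by ring
  have s2 : (FF (2^k)).card * (2 * r l) ≤ 72 * (2 * r l * (FF (2^l)).card) * ((4:ℝ)^k/4^l) := by
    calc _ ≤ (4:ℝ)^k * (2 * r l) := by gcongr
      _ = (2 * r l * 4^l) * ((4:ℝ)^k/4^l) := by field_simp
      _ ≤ (2 * r l * (72 * (FF (2^l)).card)) * ((4:ℝ)^k/4^l) := by
        gcongr; linarith
      _ = _ := by ring
  linarith

lemma geo (l : ℕ) (J : Finset ℕ) : ∑ k ∈ J, (if k ≤ l then (4:ℝ)^k/4^l else 0) ≤ 2 := by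
  have h : ∀ l : ℕ, ∑ k ∈ Finset.range (l+1), (4:ℝ)^k ≤ 2 * 4^l := by
    intro l
    induction l with
    | zero => norm_num
    | succ n ih =>
      rw [Finset.sum_range_succ]
      have : (0:ℝ) < 4^n := by positivity
      rw [pow_succ]; linarith
  rw [← Finset.sum_filter]
  calc _ ≤ ∑ k ∈ Finset.range (l+1), (4:ℝ)^k/4^l := by
        apply Finset.sum_le_sum_of_subset_of_nonneg
        · intro k hk; simp at hk ⊢; omega
        · intros; positivity
    _ = (∑ k ∈ Finset.range (l+1), (4:ℝ)^k)/4^l := by rw [Finset.sum_div]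
    _ ≤ 2 := by rw [div_le_iff₀ (by positivity)]; exact h l

lemma block_bound (r : ℕ → ℝ) (hr0 : ∀ k, 0 < r k) (hra : Antitone r) (J : Finset ℕ)
    (U : Set ℝ) (hU : MeasurableSet U) (hUf : volume U ≠ ⊤)
    (hBU : ∀ k ∈ J, ∀ f ∈ FF (2^k), Metric.ball (f:ℝ) (r k) ⊆ U)
    (hS : 1 ≤ ∑ k ∈ J, 2 * r k * (FF (2^k)).card) : 1/432 ≤ volume.real U := by
  set a : ℕ → ℝ := fun k => 2 * r k * (FF (2^k)).card with ha
  have ha0 : ∀ k, 0 ≤ a k := fun k => by have := hr0 k; simp only [ha]; positivity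
  set P : ℕ → ℕ → ℝ := fun k l => ∑ f ∈ FF (2^k), ∑ g ∈ FF (2^l), volume.real (Metric.ball (f:ℝ) (r k) ∩ Metric.ball (g:ℝ) (r l)) with hP
  have hPs : ∀ k l, P k l = P l k := by
    intro k l
    simp only [hP]
    rw [Finset.sum_comm]
    simp_rw [Set.inter_comm]
  set D : ℕ → ℕ → ℝ := fun k l => if k ≤ l then (4:ℝ)^k/4^l else 0 with hD
  have hD0 : ∀ k l, 0 ≤ D k l := by intro k l; simp only [hD]; split_ifs <;> positivity
  have hPb : ∀ k l, P k l ≤ 144 * a k * a l + 72 * (a l * D k l + a k * D l k) := by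
    have main : ∀ k l, k ≤ l → P k l ≤ 144 * a k * a l + 72 * (a l * D k l) := by
      intro k l h
      have := pair_bound r hr0 hra k l h
      simp only [hP, ha, hD, if_pos h]
      linarith
    intro k l
    have p1 := mul_nonneg (ha0 l) (hD0 k l)
    have p2 := mul_nonneg (ha0 k) (hD0 l k)
    rcases le_total k l with h | h
    · linarith [main k l h]
    · rw [hPs]; linarith [main l k h]
  set S := ∑ k ∈ J, a k with hSd
  have tot : ∑ k ∈ J, ∑ l ∈ J, P k l ≤ 432 * S^2 := by
    have t1 : ∑ k ∈ J, ∑ l ∈ J, a l * D k l ≤ 2 * S := by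
      rw [Finset.sum_comm, hSd, Finset.mul_sum]
      apply Finset.sum_le_sum
      intro l _
      rw [← Finset.mul_sum, mul_comm 2]
      exact mul_le_mul_of_nonneg_left (geo l J) (ha0 l)
    have t2 : ∑ k ∈ J, ∑ l ∈ J, a k * D l k ≤ 2 * S := by
      rw [Finset.sum_comm]; exact t1
    have t3 : ∑ k ∈ J, ∑ l ∈ J, a k * a l = S^2 := by
      rw [sq, hSd, Finset.sum_mul_sum]
    calc _ ≤ ∑ k ∈ J, ∑ l ∈ J, (144 * (a k * a l) + 72 * (a l * D k l + a k * D l k)) := by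
          gcongr with k _ l _
          have := hPb k l
          linarith
      _ = 144 * S^2 + 72 * (∑ k ∈ J, ∑ l ∈ J, a l * D k l + ∑ k ∈ J, ∑ l ∈ J, a k * D l k) := by
          rw [← t3]
          simp only [Finset.sum_add_distrib, Finset.mul_sum, mul_add]
      _ ≤ _ := by nlinarith
  have eS : ∑ i ∈ J.sigma (fun k => FF (2^k)), volume.real (Metric.ball (i.2:ℝ) (r i.1)) = S := by
    rw [Finset.sum_sigma, hSd]
    apply Finset.sum_congr rfl
    intro k _
    simp only [ha]
    rw [Finset.sum_congr rfl (fun f _ => Real.volume_real_ball (hr0 k).le), Finset.sum_const, nsmul_eq_mul]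
    ring
  apply second_moment (J.sigma (fun k => FF (2^k))) (fun i => Metric.ball (i.2:ℝ) (r i.1)) U
  · intro i _; exact measurableSet_ball
  · exact hU
  · exact hUf
  · intro i hi
    rw [Finset.mem_sigma] at hi
    exact hBU i.1 hi.1 i.2 hi.2
  · norm_num
  · rw [eS]; linarith
  · rw [eS]
    refine le_trans (le_of_eq ?_) tot
    rw [Finset.sum_sigma]
    apply Finset.sum_congr rfl
    intro k _
    simp only [hP, Finset.sum_sigma]
    rw [Finset.sum_comm]

lemma pos_meas (r : ℕ → ℝ) (hr0 : ∀ k, 0 < r k) (hra : Antitone r) (hr1 : ∀ k, r k ≤ 1)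
    (hns : ¬ Summable (fun k => r k * 4^k)) :
    volume (⋂ m : ℕ, ⋃ k ≥ m, ⋃ f ∈ FF (2^k), Metric.ball (f:ℝ) (r k)) ≠ 0 := by
  set U : ℕ → Set ℝ := fun m => ⋃ k ≥ m, ⋃ f ∈ FF (2^k), Metric.ball (f:ℝ) (r k) with hU
  have hUo : ∀ m, IsOpen (U m) := fun m =>
    isOpen_iUnion fun k => isOpen_iUnion fun _ => isOpen_iUnion fun f => isOpen_iUnion fun _ => Metric.isOpen_ball
  have hUs : ∀ m, U m ⊆ Set.Icc (-1) 2 := by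
    intro m x hx
    simp only [hU, Set.mem_iUnion] at hx
    obtain ⟨k, hk, f, hf, hx⟩ := hx
    rw [FF_mem] at hf
    rw [Metric.mem_ball, Real.dist_eq, abs_lt] at hx
    have h1 : (0:ℝ) ≤ f := by exact_mod_cast hf.1
    have h2 : (f:ℝ) < 1 := by exact_mod_cast hf.2.1
    have := hr1 k
    constructor <;> linarith
  have hUf : ∀ m, volume (U m) ≠ ⊤ := fun m => measure_ne_top_of_subset (hUs m) (by simp)
  have hUa : Antitone U := by
    intro m n hmn x hx
    simp only [hU, Set.mem_iUnion] at hx ⊢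
    obtain ⟨k, hk, h⟩ := hx
    exact ⟨k, le_trans hmn hk, h⟩
  have hlow : ∀ m, 1/432 ≤ volume.real (U m) := by
    intro m
    set a : ℕ → ℝ := fun k => 2 * r k * (FF (2^k)).card with ha
    have ha0 : ∀ k, 0 ≤ a k := fun k => by have := hr0 k; simp only [ha]; positivity
    have hna : ¬ Summable a := by
      intro h
      apply hns
      refine Summable.of_nonneg_of_le (fun k => by have := hr0 k; positivity) (fun k => ?_) (h.mul_left 36)
      have c1 := FF_card_ge (2^k)
      have e4 : (((2^k : ℕ):ℝ))^2 = 4^k := by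
        push_cast; rw [← pow_mul, mul_comm, pow_mul]; norm_num
      rw [e4] at c1
      simp only [ha]
      nlinarith [hr0 k]
    rw [not_summable_iff_tendsto_nat_atTop_of_nonneg ha0] at hna
    obtain ⟨n, hn, hmn⟩ := ((hna.eventually_ge_atTop (1 + ∑ k ∈ Finset.range m, a k)).and
      (Filter.eventually_ge_atTop m)).exists
    apply block_bound r hr0 hra (Finset.Ico m n) (U m) (hUo m).measurableSet (hUf m)
    · intro k hk f hf x hx
      simp only [hU, Set.mem_iUnion]
      exact ⟨k, (Finset.mem_Ico.1 hk).1, f, hf, hx⟩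
    · have := Finset.sum_range_add_sum_Ico a hmn
      linarith
  have ht := tendsto_measure_iInter_atTop (μ := volume) (fun m => (hUo m).measurableSet.nullMeasurableSet) hUa ⟨0, hUf 0⟩
  have hge : ENNReal.ofReal (1/432) ≤ volume (⋂ m, U m) := by
    apply ge_of_tendsto' ht
    intro m
    simp only [Function.comp]
    rw [ENNReal.ofReal_le_iff_le_toReal (hUf m)]
    exact hlow m
  intro h0
  rw [h0] at hge
  simp at hge

lemma ae_circle (p : UnitAddCircle → Prop) (h : ∀ᵐ x : UnitAddCircle, p x) :
    ∀ᵐ y : ℝ, p (y : UnitAddCircle) := by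
  have h1 : ∀ a : ℤ, ∀ᵐ y : ℝ ∂(volume.restrict (Set.Ioc (a:ℝ) (a+1))), p (y : UnitAddCircle) := fun a =>
    (UnitAddCircle.measurePreserving_mk (a:ℝ)).quasiMeasurePreserving.ae h
  have h2 : ∀ᵐ y : ℝ ∂(volume.restrict (⋃ a : ℤ, Set.Ioc (a:ℝ) (a+1))), p (y : UnitAddCircle) := by
    rw [ae_restrict_iUnion_iff]; exact h1
  rwa [iUnion_Ioc_intCast, Measure.restrict_univ] at h2

theorem stmt_15 (ψ : ℕ → ℝ)
    (hpos : ∀ q, 1 ≤ q → 0 < ψ q)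
    (hmono : ∀ q₁ q₂, 1 ≤ q₁ → q₁ ≤ q₂ → ψ q₂ ≤ ψ q₁)
    (hdiv : Filter.Tendsto (fun N => ∑ q ∈ Finset.Icc 1 N, ψ q)
      Filter.atTop Filter.atTop) :
    ∀ᵐ ω ∂(volume : Measure ℝ),
      {q : ℕ | 1 ≤ q ∧ ∃ p : ℤ, Even p ∧ Int.gcd p (q : ℤ) = 1 ∧
        |(q : ℝ) * ω - (p : ℝ)| < ψ q}.Infinite := by
  set δ : ℕ → ℝ := fun q => if Odd q then ψ q / (2 * q) else 0 with hδ
  have hδ0 : Filter.Tendsto δ Filter.atTop (nhds 0) := by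
    have h1 : Filter.Tendsto (fun q : ℕ => ψ 1 / (q:ℝ)) Filter.atTop (nhds 0) :=
      tendsto_const_div_atTop_nhds_zero_nat _
    refine squeeze_zero' ?_ ?_ h1
    · filter_upwards [Filter.eventually_ge_atTop 1] with q hq
      have := hpos q hq
      simp only [hδ]; split_ifs <;> positivity
    · filter_upwards [Filter.eventually_ge_atTop 1] with q hq
      have := hpos q hq
      have h2 := hpos 1 le_rfl
      have h3 := hmono 1 q le_rfl hq
      have hq' : (1:ℝ) ≤ q := by exact_mod_cast hq
      simp only [hδ]; split_ifs
      · gcongr; linarith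
      · positivity
  have hfull : ∀ᵐ x : UnitAddCircle, x ∈ addWellApproximable UnitAddCircle δ := by
    rcases AddCircle.addWellApproximable_ae_empty_or_univ (T := 1) δ hδ0 with h | h
    swap
    · exact h
    exfalso
    have hR := ae_circle _ h
    set r : ℕ → ℝ := fun k => min (ψ (2^k) / 2^k) (1/4^k) / 2 with hr
    have hψ : ∀ k : ℕ, 0 < ψ (2^k) := fun k => hpos _ Nat.one_le_two_pow
    have hr0 : ∀ k, 0 < r k := fun k => by
      have := hψ k
      simp only [hr]; positivity
    have hra : Antitone r := by
      intro k l hkl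
      have := hψ l
      have h1 : ψ (2^l) ≤ ψ (2^k) := hmono _ _ Nat.one_le_two_pow (Nat.pow_le_pow_right (by norm_num) hkl)
      have h2 : (2:ℝ)^k ≤ 2^l := pow_le_pow_right₀ (by norm_num) hkl
      have h3 : (4:ℝ)^k ≤ 4^l := pow_le_pow_right₀ (by norm_num) hkl
      have := hψ k
      simp only [hr]
      gcongr
    have hr4 : ∀ k, r k ≤ 1/4^k := by
      intro k
      have h1 : min (ψ (2^k) / 2^k) ((1:ℝ)/4^k) ≤ 1/4^k := min_le_right _ _
      have : (0:ℝ) < 1/4^k := by positivity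
      simp only [hr]; linarith
    have hr1 : ∀ k, r k ≤ 1 := fun k => (hr4 k).trans (by
      rw [div_le_one (by positivity)]; exact one_le_pow₀ (by norm_num))
    have hrt : Filter.Tendsto r Filter.atTop (nhds 0) := by
      refine squeeze_zero (fun k => (hr0 k).le) hr4 ?_
      have := tendsto_pow_atTop_nhds_zero_of_lt_one (r := (1/4:ℝ)) (by norm_num) (by norm_num)
      simpa using this
    have hns : ¬ Summable (fun k => r k * 4^k) := by
      intro h
      apply diverge ψ hpos hmono hdiv
      refine (h.mul_left 2).congr fun k => ?_
      simp only [hr]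
      rw [show 2 * (min (ψ (2^k) / 2^k) ((1:ℝ)/4^k) / 2 * 4^k) = min (ψ (2^k) / 2^k) ((1:ℝ)/4^k) * 4^k by ring,
        min_mul_of_nonneg _ _ (by positivity)]
      congr 1
      · rw [show (4:ℝ)^k = 2^k * 2^k by rw [← mul_pow]; norm_num]
        field_simp
      · field_simp
    have hpm := pos_meas r hr0 hra hr1 hns
    have hirr : ∀ᵐ x : ℝ, Irrational x := by
      have := (Set.countable_range ((↑) : ℚ → ℝ)).ae_notMem volume
      exact this
    apply hpm
    have hno : ∀ᵐ x : ℝ, x ∉ (⋂ m : ℕ, ⋃ k ≥ m, ⋃ f ∈ FF (2^k), Metric.ball (f:ℝ) (r k)) := by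
      filter_upwards [hR, hirr] with x hx hxi hxm
      apply hx
      rw [UnitAddCircle.mem_addWellApproximable_iff]
      intro hfin
      obtain ⟨M, hM⟩ := hfin.bddAbove
      have hd : ∀ᶠ k in Filter.atTop, ∀ f ∈ FF M, r k < |x - (f:ℝ)| := by
        rw [Filter.eventually_all_finset]
        intro f _
        apply hrt.eventually (gt_mem_nhds _)
        rw [abs_pos, sub_ne_zero]
        exact hxi.ne_rat f
      obtain ⟨m, hm⟩ := Filter.eventually_atTop.1 hd
      have hxm' := Set.mem_iInter.1 hxm m
      simp only [Set.mem_iUnion] at hxm'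
      obtain ⟨k, hk, f, hf, hxf⟩ := hxm'
      rw [Metric.mem_ball, Real.dist_eq] at hxf
      rw [FF_mem] at hf
      obtain ⟨f0, f1, fo, fd⟩ := hf
      have hmem : f.den ≤ M := by
        apply hM
        have hn : 0 ≤ f.num := Rat.num_nonneg.2 f0
        have hc : ((f.num.natAbs : ℕ) : ℤ) = f.num := Int.natAbs_of_nonneg hn
        have hc' : ((f.num.natAbs : ℕ) : ℝ) = f.num := by rw [← Int.cast_natCast, hc]
        have he : ((f.num.natAbs : ℕ) : ℝ) / f.den = f := by rw [hc', Rat.cast_def]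
        have hdp : (0:ℝ) < f.den := by exact_mod_cast f.den_pos
        refine ⟨f.num.natAbs, ?_, f.reduced, ?_⟩
        · have : (f:ℝ) < 1 := by exact_mod_cast f1
          rw [← he, div_lt_one hdp] at this
          exact_mod_cast this
        · rw [he, ← AddCircle.coe_sub, UnitAddCircle.norm_eq]
          calc _ ≤ |x - f| := by
                have := round_le (x - f) 0
                simpa using this
            _ < r k := hxf
            _ ≤ ψ (2^k) / (2 * 2^k) := by
                have h1 : min (ψ (2^k) / 2^k) ((1:ℝ)/4^k) ≤ ψ (2^k) / 2^k := min_le_left _ _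
                simp only [hr]
                rw [mul_comm, ← div_div]
                linarith
            _ ≤ ψ f.den / (2 * f.den) := by
                have h1 := hmono f.den (2^k) f.den_pos fd
                have h2 := hψ k
                have h3 : (f.den:ℝ) ≤ 2^k := by exact_mod_cast fd
                have h4 := hpos f.den f.den_pos
                gcongr
            _ = δ f.den := by simp only [hδ, if_pos fo]
      have := hm k hk f ((FF_mem M f).2 ⟨f0, f1, fo, hmem⟩)
      linarith
    exact measure_eq_zero_iff_ae_notMem.2 hno
  have hR := ae_circle _ hfull
  have hhalf : ∀ᵐ ω : ℝ, (((1/2:ℝ) • ω : ℝ) : UnitAddCircle) ∈ addWellApproximable UnitAddCircle δ :=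
    (Measure.quasiMeasurePreserving_smul volume (r := (1/2:ℝ)) (by norm_num)).ae hR
  filter_upwards [hhalf] with ω hω
  rw [UnitAddCircle.mem_addWellApproximable_iff] at hω
  refine hω.mono ?_
  rintro n ⟨m, hmn, hg, hlt⟩
  have hn : 0 < n := by omega
  have hn' : (0:ℝ) < n := by exact_mod_cast hn
  have hodd : Odd n := by
    by_contra h
    simp only [hδ, if_neg h] at hlt
    exact absurd hlt (not_lt.2 (norm_nonneg _))
  simp only [hδ, if_pos hodd] at hlt
  rw [← AddCircle.coe_sub, UnitAddCircle.norm_eq] at hlt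
  set z := round ((1/2:ℝ) • ω - (m:ℝ)/n) with hz
  refine ⟨hn, 2 * (m + z * n), even_two_mul _, ?_, ?_⟩
  · rw [← Int.isCoprime_iff_gcd_eq_one]
    apply IsCoprime.mul_left
    · have : Nat.Coprime 2 n := Nat.coprime_two_left.2 hodd
      exact_mod_cast Nat.isCoprime_iff_coprime.2 this
    · apply IsCoprime.add_mul_right_left
      exact Nat.isCoprime_iff_coprime.2 hg
  · have e : (n:ℝ) * ω - ((2 * (m + z * n) : ℤ):ℝ) = (2 * n) * ((1/2:ℝ) • ω - (m:ℝ)/n - z) := by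
      push_cast
      rw [smul_eq_mul]
      field_simp
      ring
    rw [e, abs_mul, abs_of_pos (by positivity)]
    rw [lt_div_iff₀ (by positivity)] at hlt
    linarith
end
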